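/- Under μ^{ε_xδ_x} (pinning ε_x>0 at the single vertex x), the random pair (t_x,s_x) is independent of the rescaled gradient vector (t'_i,s'_i)_{i∈V∖{x}} := (t_i−t_x, (s_i−s_x)e^{t_x})_{i∈V∖{x}}: for all bounded measurable f:ℝ²→ℝ and g:(ℝ²)^{V∖{x}}→ℝ, E_{μ^{ε_xδ_x}}[f(t_x,s_x) g((t'_i,s'_i)_{i≠x})] = E_{μ^{ε_xδ_x}}[f(t_x,s_x)] · E_{μ^{ε_xδ_x}}[g((t'_i,s'_i)_{i≠x})]. Moreover the joint law of (t_x,s_x) has density (ε_x/(2π)) exp[−ε_x(cosh t_x − 1 + ½ s_x² e^{t_x})] on ℝ² (independently of the graph Γ), and the law of (t'_i,s'_i)_{i≠x} does not depend on ε_x. -/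

import Mathlib

/-!
Pass to the coordinates `(τ, σ) = (t_x, s_x)` and the rescaled gradients
`u_i = t_i - t_x`, `v_i = (s_i - s_x) e^{t_x}`, `i ≠ x`. The interaction of an edge of the graph
depends only on `(u, v)` (`Bfun_ofGrad`). Every spanning tree with nonzero weight meets the root
exactly in the edge `x ∼ ρ`, so that its weight is `ε e^τ` times a product over the remaining
`|V| - 1` edges, which scales as `e^{2(|V| - 1)τ}` (`exists_treeFactor`). The reference measure
contributes `e^{-|V|τ}` and the Jacobian `e^{-(|V| - 1)τ}` (`lintegral_ofGrad`), so all powers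
of `e^τ` cancel: for each tree the density is `ε exp (-ε (cosh τ - 1 + σ² e^τ / 2))` times a
function of `(u, v)` that does not involve `ε` (`dens_ofGrad`). The first factor has integral `2π`
(`integral_rootWeight`).

Hence `E[f g] = a(f) b(g)` for functionals `a` and `b` with `a(1) = 2π` and `b` independent of `ε`
(`exists_expect_factor`). All three claims follow once `a(1) b(1) = 1`, that is, once `μ` is known
to have total mass one (`total_mass`); this fact about the supersymmetric hyperbolic sigma model
is proved here without Grassmann variables. Summing over trees gives the determinant of the
Laplacian of the augmented graph (`matrix_tree`), and the Gaussian integral over `s` turns it into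
its square root. The remaining integral over `t` becomes, with the random potential
`b_i = ∑_j w_ij e^{t_j - t_i} + η_i e^{-t_i}` as new variable, the Sabot–Tarrès–Zeng integral
over all `b` with `diag(b) - w` positive definite (`lintegral_tField`). That one is computed by
eliminating one vertex at a time: the Schur complement of the last vertex has an inverse Gaussian
law, and integrating it out leaves an integral of the same form (`lintegral_potDens_step`).

The matrix-tree theorem is proved by expanding the determinant multilinearly in its rows, which
gives a sum over maps `p : V → V ∪ {ρ}`; the term of `p` is nonzero only if `p` has no cycle, and
such maps are the spanning trees oriented towards `ρ`.
-/

open MeasureTheory Real Filter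
open scoped BigOperators

attribute [local instance] Classical.propDecidable

namespace H22

variable {V : Type*} [Fintype V] [DecidableEq V]

/-- The augmented graph `Γ_ρ`: add an extra vertex `ρ` (encoded by `none`)
joined to every vertex of the original graph. -/
def aug (G : SimpleGraph V) : SimpleGraph (Option V) :=
  SimpleGraph.fromRel (fun a b =>
    match a, b with
    | some i, some j => G.Adj i j
    | _, _ => True)

/-- `T` is (the edge set of) a spanning tree of `G`. -/
def IsSpanningTree {α : Type*} (G : SimpleGraph α) (T : Finset (Sym2 α)) : Prop :=
  ↑T ⊆ G.edgeSet ∧ (SimpleGraph.fromEdgeSet (↑T : Set (Sym2 α))).IsTree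

/-- The finset of all spanning trees of `G`. -/
noncomputable def STrees {α : Type*} [Fintype α] [DecidableEq α] (G : SimpleGraph α) :
    Finset (Finset (Sym2 α)) :=
  Finset.univ.filter (fun T => IsSpanningTree G T)

/-- Extension of a vector `t : V → ℝ` to `Option V` by `t_ρ := 0`. -/
def extV (t : V → ℝ) : Option V → ℝ := fun a => Option.elim a 0 t

/-- Lift of a (symmetrized) function of two vertices to unordered pairs. -/
noncomputable def esym {α : Type*} (f : α → α → ℝ) : Sym2 α → ℝ :=
  Sym2.lift ⟨fun a b => (f a b + f b a) / 2, fun a b => by ring⟩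

/-- Combined edge weights on the augmented graph: `β` on edges of `Γ`,
`ε_i` on the edge `i ∼ ρ`. -/
def bres (β : V → V → ℝ) (ε : V → ℝ) : Option V → Option V → ℝ := fun a b =>
  match a, b with
  | some i, some j => β i j
  | some i, none => ε i
  | none, some j => ε j
  | none, none => 0

/-- `B_{ij}(t,s) = cosh(t_i - t_j) + ½ (s_i - s_j)² e^{t_i+t_j}` on the augmented graph. -/
noncomputable def Bfun (t s : V → ℝ) (a b : Option V) : ℝ :=
  Real.cosh (extV t a - extV t b) +
    (1 / 2) * (extV s a - extV s b) ^ 2 * Real.exp (extV t a + extV t b)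

/-- Weight `β_{ij} e^{t_i+t_j}` of an edge of the augmented graph. -/
noncomputable def treeW (β : V → V → ℝ) (ε : V → ℝ) (t : V → ℝ) : Sym2 (Option V) → ℝ :=
  esym (fun a b => bres β ε a b * Real.exp (extV t a + extV t b))

/-- Gibbs factor `e^{-β_{ij}(B_{ij}(t,s)-1)}` of an edge of the augmented graph. -/
noncomputable def gibbs (β : V → V → ℝ) (ε : V → ℝ) (t s : V → ℝ) : Sym2 (Option V) → ℝ :=
  esym (fun a b => Real.exp (-(bres β ε a b * (Bfun t s a b - 1))))

/-- The density of the measure `μ^ε` with respect to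
(Lebesgue on `ℝ^V × ℝ^V`) × (counting measure on spanning trees). -/
noncomputable def dens (G : SimpleGraph V) (β : V → V → ℝ) (ε : V → ℝ)
    (t s : V → ℝ) (T : Finset (Sym2 (Option V))) : ℝ :=
  (∏ j, Real.exp (-t j) / (2 * Real.pi)) *
  (∏ e ∈ Finset.univ.filter (fun e : Sym2 (Option V) => e ∈ (aug G).edgeSet),
      gibbs β ε t s e) *
  (∏ e ∈ T, treeW β ε t e)

/-- Expectation of an observable `f(t,s,T)` under the measure `μ^ε`. -/
noncomputable def expect (G : SimpleGraph V) (β : V → V → ℝ) (ε : V → ℝ)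
    (f : (V → ℝ) → (V → ℝ) → Finset (Sym2 (Option V)) → ℝ) : ℝ :=
  ∑ T ∈ STrees (aug G), ∫ p : (V → ℝ) × (V → ℝ), dens G β ε p.1 p.2 T * f p.1 p.2 T

/-- The weighted graph Laplacian `A(t)` of `Γ`. -/
noncomputable def Amat (G : SimpleGraph V) (β : V → V → ℝ) (t : V → ℝ) : Matrix V V ℝ :=
  Matrix.of fun i j =>
    if i = j then ∑ k ∈ Finset.univ.filter (fun k => G.Adj k j), β k j * Real.exp (t k + t j)
    else if G.Adj i j then -(β i j * Real.exp (t i + t j)) else 0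

/-- The pinning diagonal matrix `ε̂(t) = diag(ε_i e^{t_i})`. -/
noncomputable def epsHat (ε : V → ℝ) (t : V → ℝ) : Matrix V V ℝ :=
  Matrix.diagonal fun i => ε i * Real.exp (t i)

/-- The Green's function `G^ε_{xy} = e^{t_x+t_y} (A(t)+ε̂(t))⁻¹_{xy}`. -/
noncomputable def Gfun (G : SimpleGraph V) (β : V → V → ℝ) (ε : V → ℝ)
    (t : V → ℝ) (x y : V) : ℝ :=
  Real.exp (t x + t y) * (Amat G β t + epsHat ε t)⁻¹ x y

/-- The edge `i ∼ ρ` of the augmented graph. -/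
def rootEdge (i : V) : Sym2 (Option V) := s(some i, none)

/-- The set of roots `R(T) = {i ∈ V : (i ∼ ρ) ∈ T}`. -/
noncomputable def roots (T : Finset (Sym2 (Option V))) : Finset V :=
  Finset.univ.filter fun i => rootEdge i ∈ T

/-- The forest `F(T) = T ∩ E`: edges of `T` not incident to `ρ`. -/
noncomputable def forestOf (T : Finset (Sym2 (Option V))) : Finset (Sym2 (Option V)) :=
  T.filter fun e => ¬ ((none : Option V) ∈ e)

/-- `x ↔_T y`: `x` and `y` are connected in `T` through a path not using `ρ`. -/
def connIn (T : Finset (Sym2 (Option V))) (x y : V) : Prop :=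
  (SimpleGraph.fromEdgeSet (↑(forestOf T) : Set (Sym2 (Option V)))).Reachable (some x) (some y)

/-- The observable `O^π_{xy}`. -/
noncomputable def obs (pv : V → ℝ) (x y : V) (t : V → ℝ)
    (T : Finset (Sym2 (Option V))) : ℝ :=
  Real.exp (t x + t y) / (pv x * Real.exp (t x) + pv y * Real.exp (t y)) *
    (if rootEdge x ∈ T ∧ connIn T x y then 1 else 0)

/-- The pinning `ε = (π_i ε)_{i ∈ V}`. -/
def pinOf (pv : V → ℝ) (ε : ℝ) : V → ℝ := fun i => pv i * ε

/-- The pinning `c δ_x` concentrated at the single vertex `x`. -/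
def singlePin (x : V) (c : ℝ) : V → ℝ := fun i => if i = x then c else 0

end H22

namespace H22

/-! ### One-dimensional and Gaussian integrals -/

open scoped ENNReal

/-- The one-dimensional integral behind both the normalisation of a single pinned vertex and the
vertex-elimination step: symmetrise `τ ↦ -τ`, then substitute `z = sinh (τ / 2)`. -/
lemma lintegral_exp_cosh {a : ℝ} (ha : 0 < a) :
    ∫⁻ τ : ℝ, ENNReal.ofReal (exp (τ / 2) * exp (-(a * (cosh τ - 1))))
      = ENNReal.ofReal (√(2 * π / a)) := by
  set J := ∫⁻ τ : ℝ, ENNReal.ofReal (exp (τ / 2) * exp (-(a * (cosh τ - 1)))) with hJ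
  have hneg : J = ∫⁻ τ : ℝ, ENNReal.ofReal (exp (-(τ / 2)) * exp (-(a * (cosh τ - 1)))) := by
    rw [hJ, ← lintegral_neg_eq_self]
    simp [neg_div]
  have hc : J + J = ∫⁻ τ : ℝ, ENNReal.ofReal (|cosh (τ / 2) * (1 / 2)|) *
      ENNReal.ofReal (4 * exp (-(2 * a) * (sinh (τ / 2)) ^ 2)) := by
    conv_lhs => rw [hneg]
    conv_lhs => arg 2; rw [← hneg, hJ]
    rw [← lintegral_add_left (by fun_prop)]
    refine lintegral_congr fun τ => ?_
    rw [← ENNReal.ofReal_add (by positivity) (by positivity), ← ENNReal.ofReal_mul (by positivity),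
      abs_of_pos (by have := cosh_pos (τ / 2); positivity)]
    congr 1
    have h1 : cosh τ - 1 = 2 * sinh (τ / 2) ^ 2 := by
      have h2 : cosh τ = cosh (2 * (τ / 2)) := by congr 1; ring
      rw [h2, cosh_two_mul, cosh_sq]; ring
    rw [h1, cosh_eq]
    have h3 : -(2 * a) * sinh (τ / 2) ^ 2 = -(a * (2 * sinh (τ / 2) ^ 2)) := by ring
    rw [h3]; ring
  have hsub : J + J = ∫⁻ z : ℝ, ENNReal.ofReal (4 * exp (-(2 * a) * z ^ 2)) := by
    rw [hc]
    have himg : (fun τ : ℝ => sinh (τ / 2)) '' Set.univ = Set.univ := by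
      rw [Set.image_univ, Set.range_eq_univ]
      intro z
      obtain ⟨y, hy⟩ := sinh_surjective z
      exact ⟨2 * y, by simpa using hy⟩
    have := lintegral_image_eq_lintegral_abs_deriv_mul (s := Set.univ)
      (f := fun τ : ℝ => sinh (τ / 2)) (f' := fun τ => cosh (τ / 2) * (1 / 2)) MeasurableSet.univ
      (fun τ _ => ((hasDerivAt_id τ).div_const 2).sinh.hasDerivWithinAt)
      (fun p _ q _ h => by
        have := sinh_injective h
        linarith)
      (fun z => ENNReal.ofReal (4 * exp (-(2 * a) * z ^ 2)))
    rw [himg] at this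
    simpa using this.symm
  have hg : ∫⁻ z : ℝ, ENNReal.ofReal (4 * exp (-(2 * a) * z ^ 2))
      = ENNReal.ofReal (√(2 * π / a)) + ENNReal.ofReal (√(2 * π / a)) := by
    rw [← ofReal_integral_eq_lintegral_ofReal
      ((integrable_exp_neg_mul_sq (by positivity)).const_mul 4)
      (Eventually.of_forall fun z => by positivity), integral_const_mul, integral_gaussian,
      ← ENNReal.ofReal_add (by positivity) (by positivity)]
    congr 1
    have : 2 * π / a = 2 ^ 2 * (π / (2 * a)) := by field_simp
    rw [this, Real.sqrt_mul (by norm_num), Real.sqrt_sq (by norm_num)]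
    ring
  have h2 : 2 * J = 2 * ENNReal.ofReal (√(2 * π / a)) := by
    rw [two_mul, two_mul, hsub, hg]
  exact (ENNReal.mul_right_inj (by norm_num) (by norm_num)).mp h2

/-- The integral over the Schur complement `c` of one vertex (an inverse Gaussian law). -/
lemma lintegral_invGauss {a : ℝ} (ha : 0 ≤ a) :
    ∫⁻ c in Set.Ioi (0 : ℝ), ENNReal.ofReal (exp (-(c / 2) - a ^ 2 / c / 2 + a) / √c)
      = ENNReal.ofReal (√(2 * π)) := by
  rcases ha.eq_or_lt with rfl | ha
  · have h := Real.integral_rpow_mul_exp_neg_mul_Ioi (a := 1 / 2) (r := 1 / 2)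
      (by norm_num) (by norm_num)
    have hne : ∫ t in Set.Ioi (0 : ℝ), t ^ ((1 / 2 : ℝ) - 1) * exp (-(1 / 2 * t)) ≠ 0 := by
      rw [h, Real.Gamma_one_half_eq]; positivity
    have hval : (1 / (1 / 2 : ℝ)) ^ (1 / 2 : ℝ) * Gamma (1 / 2) = √(2 * π) := by
      rw [Real.Gamma_one_half_eq, one_div_one_div, ← Real.sqrt_eq_rpow,
        Real.sqrt_mul (by norm_num)]
    rw [← hval, ← h, ofReal_integral_eq_lintegral_ofReal (Integrable.of_integral_ne_zero hne)
      ((ae_restrict_mem measurableSet_Ioi).mono fun t ht => by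
        have : (0 : ℝ) < t := ht
        simp only [Pi.zero_apply]; positivity)]
    refine setLIntegral_congr_fun measurableSet_Ioi fun t ht => ?_
    have ht : (0 : ℝ) < t := ht
    congr 1
    rw [show (1 / 2 : ℝ) - 1 = -(1 / 2) by norm_num, Real.rpow_neg ht.le, ← Real.sqrt_eq_rpow,
      div_eq_inv_mul]
    congr 2
    simp; ring
  · have himg : (fun τ : ℝ => a * exp τ) '' Set.univ = Set.Ioi 0 := by
      ext c
      simp only [Set.image_univ, Set.mem_range, Set.mem_Ioi]
      constructor
      · rintro ⟨τ, rfl⟩; positivity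
      · intro hc
        exact ⟨Real.log (c / a), by rw [Real.exp_log (by positivity)]; field_simp⟩
    have := lintegral_image_eq_lintegral_abs_deriv_mul (s := Set.univ)
      (f := fun τ : ℝ => a * exp τ) (f' := fun τ => a * exp τ) MeasurableSet.univ
      (fun τ _ => ((Real.hasDerivAt_exp τ).const_mul a).hasDerivWithinAt)
      (fun p _ q _ h => by
        have h' : a * exp p = a * exp q := h
        exact Real.exp_injective (mul_left_cancel₀ ha.ne' h'))
      (fun c => ENNReal.ofReal (exp (-(c / 2) - a ^ 2 / c / 2 + a) / √c))
    rw [himg] at this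
    rw [this, Measure.restrict_univ]
    have h1 : ∀ τ : ℝ, ENNReal.ofReal |a * exp τ| *
        ENNReal.ofReal (exp (-(a * exp τ / 2) - a ^ 2 / (a * exp τ) / 2 + a) / √(a * exp τ))
        = ENNReal.ofReal (√a) * ENNReal.ofReal (exp (τ / 2) * exp (-(a * (cosh τ - 1)))) := by
      intro τ
      rw [← ENNReal.ofReal_mul (by positivity), ← ENNReal.ofReal_mul (by positivity),
        abs_of_pos (by positivity)]
      congr 1
      have h2 : a ^ 2 / (a * exp τ) = a * exp (-τ) := by rw [Real.exp_neg]; field_simp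
      have h3 : -(a * exp τ / 2) - a * exp (-τ) / 2 + a = -(a * (cosh τ - 1)) := by
        rw [cosh_eq]; ring
      have h4 : √(a * exp τ) = √a * exp (τ / 2) := by
        rw [Real.sqrt_mul ha.le, ← Real.exp_half]
      have h5 : exp τ = exp (τ / 2) * exp (τ / 2) := by rw [← Real.exp_add]; ring_nf
      rw [h2, h3, h4, h5]
      have h6 : √a * √a = a := Real.mul_self_sqrt ha.le
      field_simp
      rw [pow_two, h6]
    simp_rw [h1]
    rw [lintegral_const_mul _ (by fun_prop), lintegral_exp_cosh ha,
      ← ENNReal.ofReal_mul (by positivity), ← Real.sqrt_mul ha.le]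
    congr 2
    field_simp

open Matrix in
/-- Gaussian integral of a positive definite quadratic form, by the change of variables
`v = B s` with `A = Bᴴ B`. -/
lemma lintegral_gaussian_quadForm {ι : Type*} [Fintype ι] {A : Matrix ι ι ℝ} (hA : A.PosDef) :
    ∫⁻ s : ι → ℝ, ENNReal.ofReal (exp (-(1 / 2) * (s ⬝ᵥ A *ᵥ s)))
      = ENNReal.ofReal (√(2 * π)) ^ (Fintype.card ι) * ENNReal.ofReal ((√A.det)⁻¹) := by
  obtain ⟨B, hB⟩ : ∃ B : Matrix ι ι ℝ, A = Bᴴ * B := by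
    open scoped MatrixOrder in
    exact CStarAlgebra.nonneg_iff_eq_star_mul_self.mp hA.posSemidef.nonneg
  have hdet : A.det = B.det * B.det := by rw [hB, det_mul, det_conjTranspose]; simp
  have hB0 : B.det ≠ 0 := fun h => by
    have := hA.det_pos
    rw [hdet, h] at this; simp at this
  have hq : ∀ s, s ⬝ᵥ A *ᵥ s = ∑ i, (toLin' B s) i ^ 2 := by
    intro s
    rw [hB, ← mulVec_mulVec, dotProduct_mulVec, vecMul_conjTranspose]
    simp [dotProduct, pow_two]
  have hmap := Real.map_matrix_volume_pi_eq_smul_volume_pi hB0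
  have h1 : ∫⁻ s : ι → ℝ, ENNReal.ofReal (exp (-(1 / 2) * (s ⬝ᵥ A *ᵥ s)))
      = ∫⁻ v, ENNReal.ofReal (∏ i, exp (-(1 / 2) * (v i) ^ 2))
          ∂(Measure.map (toLin' B) volume) := by
    rw [lintegral_map (by fun_prop) ((toLin' B).continuous_on_pi.measurable)]
    refine lintegral_congr fun s => ?_
    rw [hq, ← Real.exp_sum, Finset.mul_sum]
  have h2 : ∫ y : ℝ, exp (-(1 / 2) * y ^ 2) = √(2 * π) := by
    rw [integral_gaussian]
    congr 1; ring
  have h3 : ∫⁻ v : ι → ℝ, ENNReal.ofReal (∏ i, exp (-(1 / 2) * (v i) ^ 2))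
      = ENNReal.ofReal (√(2 * π)) ^ (Fintype.card ι) := by
    rw [volume_pi, ← ofReal_integral_eq_lintegral_ofReal
      (Integrable.fintype_prod (f := fun _ y => exp (-(1 / 2) * y ^ 2))
        fun _ => integrable_exp_neg_mul_sq (by norm_num))
      (Eventually.of_forall fun z => by positivity),
      integral_fintype_prod_eq_prod (fun _ y => exp (-(1 / 2) * y ^ 2))]
    simp only [h2, Finset.prod_const, Finset.card_univ]
    rw [ENNReal.ofReal_pow (by positivity)]
  rw [h1, hmap, lintegral_smul_measure, h3, hdet, smul_eq_mul, mul_comm,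
    Real.sqrt_mul_self_eq_abs, abs_inv]

end H22

namespace H22

/-! ### The Sabot–Tarrès–Zeng integral -/

open scoped ENNReal
open Matrix

/-- A positive definite matrix with nonpositive off-diagonal entries has an entrywise nonnegative
inverse (M-matrix property), in the form of a comparison principle: test `H ψ = η` against the
negative part of `ψ`. -/
lemma nonneg_of_mulVec_nonneg {ι : Type*} [Fintype ι] {H : Matrix ι ι ℝ} (hH : H.PosDef)
    (hoff : ∀ i j, i ≠ j → H i j ≤ 0) {ψ : ι → ℝ} (hψ : ∀ i, 0 ≤ (H *ᵥ ψ) i) (i : ι) :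
    0 ≤ ψ i := by
  set m : ι → ℝ := fun i => max (-ψ i) 0 with hm
  set p : ι → ℝ := fun i => max (ψ i) 0 with hp
  have hpm : ψ = p - m := by
    ext k
    simp only [hm, hp, Pi.sub_apply]
    rcases le_total (ψ k) 0 with h | h
    · rw [max_eq_right h, max_eq_left (by linarith)]; ring
    · rw [max_eq_left h, max_eq_right (by linarith)]; ring
  have hm0 : ∀ k, 0 ≤ m k := fun k => le_max_right _ _
  have hp0 : ∀ k, 0 ≤ p k := fun k => le_max_right _ _
  have hmp : ∀ k, m k * p k = 0 := by
    intro k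
    simp only [hm, hp]
    rcases le_total (ψ k) 0 with h | h
    · rw [max_eq_right h, mul_zero]
    · rw [max_eq_right (by linarith : -ψ k ≤ 0), zero_mul]
  have h1 : 0 ≤ m ⬝ᵥ (H *ᵥ ψ) := Finset.sum_nonneg fun k _ => mul_nonneg (hm0 k) (hψ k)
  have h2 : m ⬝ᵥ (H *ᵥ p) ≤ 0 := by
    simp only [dotProduct, mulVec, Finset.mul_sum]
    refine Finset.sum_nonpos fun k _ => Finset.sum_nonpos fun l _ => ?_
    by_cases hkl : k = l
    · subst hkl
      rw [mul_left_comm, hmp k, mul_zero]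
    · have := mul_nonneg (hm0 k) (hp0 l)
      have := hoff k l hkl
      nlinarith
  have h3 : m ⬝ᵥ (H *ᵥ m) ≤ 0 := by
    have : m ⬝ᵥ (H *ᵥ ψ) = m ⬝ᵥ (H *ᵥ p) - m ⬝ᵥ (H *ᵥ m) := by
      rw [hpm, mulVec_sub, dotProduct_sub]
    linarith
  have h4 : m = 0 := by
    by_contra hne
    have := hH.dotProduct_mulVec_pos hne
    simp only [star_trivial] at this
    linarith
  have h5 := congrFun h4 i
  simp only [hm, Pi.zero_apply] at h5
  have := le_max_left (-ψ i) 0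
  linarith

/-- The random Schrödinger operator `diag(b) - w`. -/
noncomputable def schr {ι : Type*} (w : Matrix ι ι ℝ) (b : ι → ℝ) : Matrix ι ι ℝ :=
  Matrix.diagonal b - w

/-- The (unnormalised) density of the random potential `b` in the Sabot–Tarrès–Zeng integral,
supported on the potentials for which `diag(b) - w` is positive definite. -/
noncomputable def potDens {ι : Type*} [Fintype ι] (w : Matrix ι ι ℝ) (η b : ι → ℝ) : ℝ≥0∞ :=
  if (schr w b).PosDef then
    ENNReal.ofReal (exp (-(1 / 2) * (1 ⬝ᵥ schr w b *ᵥ 1) - 1 / 2 * (η ⬝ᵥ (schr w b)⁻¹ *ᵥ η)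
      + η ⬝ᵥ 1) / √(schr w b).det)
  else 0

lemma continuous_schr {ι : Type*} (w : Matrix ι ι ℝ) : Continuous (schr w) := by
  unfold schr
  fun_prop

lemma measurableSet_schr_posDef {ι : Type*} [Fintype ι] {w : Matrix ι ι ℝ} (hw : w.IsHermitian) :
    MeasurableSet {b : ι → ℝ | (schr w b).PosDef} := by
  have hH : ∀ b, (schr w b).IsHermitian := fun b =>
    (isHermitian_diagonal_of_self_adjoint b (by ext; simp)).sub hw
  have : {b : ι → ℝ | (schr w b).PosDef} =
      (⋂ v : ι → ℝ, {b | 0 ≤ v ⬝ᵥ schr w b *ᵥ v}) ∩ {b | (schr w b).det ≠ 0} := by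
    ext b
    simp only [Set.mem_ofPred_eq, Set.mem_inter_iff, Set.mem_iInter]
    constructor
    · intro h
      exact ⟨fun v => by simpa using h.posSemidef.dotProduct_mulVec_nonneg v, h.det_pos.ne'⟩
    · rintro ⟨h1, h2⟩
      have h3 : (schr w b).PosSemidef :=
        PosSemidef.of_dotProduct_mulVec_nonneg (hH b) fun v => by simpa using h1 v
      exact h3.posDef_iff_det_ne_zero.mpr h2
  rw [this]
  have hc := continuous_schr w
  refine (IsClosed.measurableSet (isClosed_iInter fun v => ?_)).inter
    (IsOpen.measurableSet ?_)
  · exact isClosed_le continuous_const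
      (continuous_const.dotProduct (hc.matrix_mulVec continuous_const))
  · exact isOpen_ne_fun hc.matrix_det continuous_const

lemma measurable_potDens {ι : Type*} [Fintype ι] {w : Matrix ι ι ℝ} (hw : w.IsHermitian)
    (η : ι → ℝ) : Measurable (potDens w η) := by
  have hc := continuous_schr w
  refine Measurable.ite (measurableSet_schr_posDef hw) ?_ measurable_const
  have hinv : Measurable fun b => η ⬝ᵥ (schr w b)⁻¹ *ᵥ η := by
    have : ∀ b, η ⬝ᵥ (schr w b)⁻¹ *ᵥ η
        = (schr w b).det⁻¹ * (η ⬝ᵥ (schr w b).adjugate *ᵥ η) := by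
      intro b
      rw [Matrix.inv_def, Ring.inverse_eq_inv', smul_mulVec, dotProduct_smul, smul_eq_mul]
    simp_rw [this]
    exact hc.matrix_det.measurable.inv.mul
      (continuous_const.dotProduct (hc.matrix_adjugate.matrix_mulVec continuous_const)).measurable
  have h1 : Measurable fun b => (1 : ι → ℝ) ⬝ᵥ schr w b *ᵥ 1 :=
    (continuous_const.dotProduct (hc.matrix_mulVec continuous_const)).measurable
  have h2 : Measurable fun b => (schr w b).det := hc.matrix_det.measurable
  fun_prop

section Step

variable {ι : Type*} [Fintype ι] (A : Matrix ι ι ℝ) (v : ι → ℝ) (y : ℝ)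

/-- The matrix `A` bordered by one more row and column `-v` with corner entry `y`. -/
def bord : Matrix (ι ⊕ Unit) (ι ⊕ Unit) ℝ :=
  fromBlocks A (of fun i _ => -v i) (of fun _ i => -v i) (of fun _ _ => y)

variable {A}

lemma schur_entry :
    ((of fun _ _ => y : Matrix Unit Unit ℝ) - (of fun _ i => -v i : Matrix Unit ι ℝ) * A⁻¹ *
      (of fun i _ => -v i : Matrix ι Unit ℝ)) = of fun _ _ => y - v ⬝ᵥ A⁻¹ *ᵥ v := by
  ext a b
  rw [Matrix.mul_assoc]
  simp [Matrix.mul_apply, dotProduct, mulVec]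

lemma det_bord {inst : DecidableEq (ι ⊕ Unit)} (hA : A.PosDef) :
    (bord A v y).det = A.det * (y - v ⬝ᵥ A⁻¹ *ᵥ v) := by
  obtain rfl : inst = instDecidableEqSum := Subsingleton.elim _ _
  have : Invertible A := hA.isUnit.invertible
  rw [bord, det_fromBlocks₁₁, invOf_eq_nonsing_inv, schur_entry v y]
  simp

/-- Schur complement criterion for positive definiteness of a bordered matrix. -/
lemma bord_posDef_iff : (bord A v y).PosDef ↔ A.PosDef ∧ 0 < y - v ⬝ᵥ A⁻¹ *ᵥ v := by
  have hB : (of fun _ i => -v i : Matrix Unit ι ℝ) = (of fun i _ => -v i : Matrix ι Unit ℝ)ᴴ := by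
    ext; simp
  have key : ∀ hA : A.PosDef, (bord A v y).PosSemidef ↔ 0 ≤ y - v ⬝ᵥ A⁻¹ *ᵥ v := by
    intro hA
    have : Invertible A := hA.isUnit.invertible
    rw [bord, hB, PosDef.fromBlocks₁₁ _ _ hA, ← hB, schur_entry v y]
    constructor
    · intro h; simpa using h.diag_nonneg (i := ())
    · intro h
      have : (of fun _ _ => y - v ⬝ᵥ A⁻¹ *ᵥ v : Matrix Unit Unit ℝ)
          = diagonal fun _ => y - v ⬝ᵥ A⁻¹ *ᵥ v := by ext; simp
      rw [this]
      exact PosSemidef.diagonal fun _ => h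
  constructor
  · intro h
    have hA : A.PosDef := by
      have := h.submatrix (e := (Sum.inl : ι → ι ⊕ Unit)) Sum.inl_injective
      rwa [show (bord A v y).submatrix Sum.inl Sum.inl = A by ext; simp [bord]] at this
    have h0 := (key hA).1 h.posSemidef
    refine ⟨hA, h0.lt_of_ne fun h1 => ?_⟩
    have := h.det_pos
    rw [det_bord v y hA, ← h1] at this
    simp at this
  · rintro ⟨hA, h⟩
    refine ((key hA).2 h.le).posDef_iff_det_ne_zero.mpr ?_
    rw [det_bord v y hA]
    exact mul_ne_zero hA.det_pos.ne' h.ne'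

lemma bord_mulVec (f : ι → ℝ) (u : ℝ) :
    bord A v y *ᵥ Sum.elim f (fun _ => u)
      = Sum.elim (A *ᵥ f - u • v) (fun _ => y * u - v ⬝ᵥ f) := by
  rw [bord, fromBlocks_mulVec]
  ext (i | i)
  · simp [mulVec, dotProduct]; ring
  · simp [mulVec, dotProduct]; ring

lemma bord_quadForm (f : ι → ℝ) (u : ℝ) :
    Sum.elim f (fun _ => u) ⬝ᵥ bord A v y *ᵥ Sum.elim f (fun _ => u)
      = f ⬝ᵥ A *ᵥ f - 2 * u * (v ⬝ᵥ f) + y * u ^ 2 := by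
  rw [bord_mulVec, sumElim_dotProduct_sumElim, dotProduct_sub, dotProduct_smul,
    dotProduct_comm f v]
  simp [dotProduct]; ring

/-- The inverse quadratic form of a bordered matrix, with Schur complement
`c = y - ⟨v, A⁻¹ v⟩`. -/
lemma bord_inv_quadForm {_ : DecidableEq (ι ⊕ Unit)} (h : (bord A v y).PosDef) (f : ι → ℝ) (u : ℝ) :
    Sum.elim f (fun _ => u) ⬝ᵥ (bord A v y)⁻¹ *ᵥ Sum.elim f (fun _ => u)
      = f ⬝ᵥ A⁻¹ *ᵥ f + (u + v ⬝ᵥ A⁻¹ *ᵥ f) ^ 2 / (y - v ⬝ᵥ A⁻¹ *ᵥ v) := by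
  obtain ⟨hA, hc⟩ := (bord_posDef_iff v y).1 h
  set c := y - v ⬝ᵥ A⁻¹ *ᵥ v with hcdef
  set z := (u + v ⬝ᵥ A⁻¹ *ᵥ f) / c with hz
  have hAA : ∀ g : ι → ℝ, A *ᵥ (A⁻¹ *ᵥ g) = g := fun g => by
    rw [mulVec_mulVec, mul_nonsing_inv _ ((isUnit_iff_isUnit_det A).1 hA.isUnit), one_mulVec]
  have hsol : bord A v y *ᵥ Sum.elim (A⁻¹ *ᵥ (f + z • v)) (fun _ => z)
      = Sum.elim f (fun _ => u) := by
    rw [bord_mulVec, hAA, add_sub_cancel_right]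
    congr 1
    ext
    rw [mulVec_add, mulVec_smul, dotProduct_add, dotProduct_smul, smul_eq_mul]
    have : z * c = u + v ⬝ᵥ A⁻¹ *ᵥ f := by rw [hz]; field_simp
    rw [hcdef] at this
    linarith
  have hinv : (bord A v y)⁻¹ *ᵥ Sum.elim f (fun _ => u)
      = Sum.elim (A⁻¹ *ᵥ (f + z • v)) (fun _ => z) := by
    rw [← hsol, mulVec_mulVec,
      nonsing_inv_mul _ ((isUnit_iff_isUnit_det _).1 h.isUnit), one_mulVec]
  have hsymm : f ⬝ᵥ A⁻¹ *ᵥ v = v ⬝ᵥ A⁻¹ *ᵥ f := by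
    have ht : (A⁻¹)ᵀ = A⁻¹ := by simpa using hA.inv.isHermitian.eq
    rw [dotProduct_comm v, dotProduct_mulVec, ← mulVec_transpose, ht]
  rw [hinv, sumElim_dotProduct_sumElim, mulVec_add, mulVec_smul, dotProduct_add, dotProduct_smul,
    hsymm]
  simp only [dotProduct, Finset.univ_unique, Finset.sum_const, Finset.card_singleton, one_smul,
    smul_eq_mul]
  rw [hz]
  field_simp
  simp only [dotProduct]
  ring

/-- Eliminating one vertex: integrating out the potential at the last vertex reproduces the
integrand of the remaining vertices, with `v` added to the source `η`. -/
lemma lintegral_potDens_step {w : Matrix ι ι ℝ} (hoff : ∀ i j, 0 ≤ w i j) (hv : ∀ i, 0 ≤ v i)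
    {η : ι → ℝ} (hη : ∀ i, 0 ≤ η i) {e : ℝ} (he : 0 ≤ e) (b : ι → ℝ) :
    ∫⁻ y : ℝ, potDens (bord w (-v) 0) (Sum.elim η fun _ => e) (Sum.elim b fun _ => y)
      = ENNReal.ofReal (√(2 * π)) * potDens w (η + v) b := by
  have hb : ∀ y : ℝ, schr (bord w (-v) 0) (Sum.elim b fun _ => y) = bord (schr w b) v y := by
    intro y
    ext (i | i) (j | j) <;> simp [schr, bord, diagonal_apply]
  simp only [potDens, hb]
  by_cases hA : (schr w b).PosDef
  swap
  · simp [bord_posDef_iff, hA]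
  set A := schr w b with hAdef
  set k := v ⬝ᵥ A⁻¹ *ᵥ v with hk
  have hAA : ∀ g : ι → ℝ, A *ᵥ (A⁻¹ *ᵥ g) = g := fun g => by
    rw [mulVec_mulVec, mul_nonsing_inv _ ((isUnit_iff_isUnit_det A).1 hA.isUnit), one_mulVec]
  have ha : 0 ≤ e + v ⬝ᵥ A⁻¹ *ᵥ η := by
    refine add_nonneg he (Finset.sum_nonneg fun i _ => mul_nonneg (hv i) ?_)
    refine nonneg_of_mulVec_nonneg hA (fun i j hij => ?_) (fun j => ?_) i
    · rw [hAdef, schr, Matrix.sub_apply, diagonal_apply_ne _ hij]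
      linarith [hoff i j]
    · rw [hAA]; exact hη j
  have hsymm : η ⬝ᵥ A⁻¹ *ᵥ v = v ⬝ᵥ A⁻¹ *ᵥ η := by
    have ht : (A⁻¹)ᵀ = A⁻¹ := by simpa using hA.inv.isHermitian.eq
    rw [dotProduct_comm v, dotProduct_mulVec, ← mulVec_transpose, ht]
  -- After the shift `y = c + k`, the `y`-integral runs over the Schur complement `c > 0`.
  rw [if_pos hA, ← lintegral_invGauss ha, ← lintegral_mul_const _ (by fun_prop),
    ← lintegral_indicator measurableSet_Ioi]
  conv_rhs => rw [← lintegral_sub_right_eq_self _ k]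
  refine lintegral_congr fun y => ?_
  by_cases hc : 0 < y - k
  swap
  · rw [if_neg (by rw [bord_posDef_iff]; exact fun h => hc h.2),
      Set.indicator_of_notMem (by simpa using hc)]
  have hP : (bord A v y).PosDef := (bord_posDef_iff v y).2 ⟨hA, hc⟩
  rw [if_pos hP, Set.indicator_of_mem (by simpa using hc), ← ENNReal.ofReal_mul (by positivity),
    det_bord v y hA, bord_inv_quadForm v y hP]
  have h1 : (1 : ι ⊕ Unit → ℝ) = Sum.elim (1 : ι → ℝ) (fun _ => 1) := by ext (i | i) <;> rfl
  rw [h1, bord_quadForm, sumElim_dotProduct_sumElim, Real.sqrt_mul hA.det_pos.le, div_mul_div_comm,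
    ← Real.exp_add, ← hk]
  congr 1
  rw [mul_comm (√A.det)]
  congr 2
  rw [mulVec_add, dotProduct_add, add_dotProduct, add_dotProduct, add_dotProduct, hsymm, ← hk]
  simp only [dotProduct, Finset.univ_unique, Finset.sum_const, Finset.card_singleton, one_smul]
  ring

end Step

/-- Relabelling the vertices does not change the integral over the potential. -/
lemma lintegral_potDens_equiv {α κ : Type*} [Fintype α] [Fintype κ] (e : α ≃ κ)
    (w : Matrix κ κ ℝ) (η : κ → ℝ) :
    ∫⁻ b : κ → ℝ, potDens w η b = ∫⁻ b : α → ℝ, potDens (w.submatrix e e) (η ∘ e) b := by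
  rw [← (volume_measurePreserving_piCongrLeft (fun _ : κ => ℝ) e).lintegral_comp_emb
    (MeasurableEquiv.measurableEmbedding _)]
  refine lintegral_congr fun b => ?_
  have hb : (MeasurableEquiv.piCongrLeft (fun _ : κ => ℝ) e b) = b ∘ e.symm := by
    ext i
    obtain ⟨j, rfl⟩ := e.surjective i
    simp [MeasurableEquiv.piCongrLeft, Equiv.piCongrLeft_apply_apply]
  have hs : schr (w.submatrix e e) b = (schr w (b ∘ e.symm)).submatrix e e := by
    ext i j
    simp [schr, diagonal_apply]
  rw [hb]
  simp only [potDens, hs]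
  have hp : ((schr w (b ∘ e.symm)).submatrix e e).PosDef ↔ (schr w (b ∘ e.symm)).PosDef := by
    constructor
    · intro h
      simpa using h.submatrix (e := e.symm) e.symm.injective
    · intro h
      exact h.submatrix e.injective
  simp only [hp, inv_submatrix_equiv, submatrix_mulVec_equiv, det_submatrix_equiv_self]
  have hd : ∀ f g : κ → ℝ, (f ∘ e) ⬝ᵥ (g ∘ e) = f ⬝ᵥ g := fun f g =>
    Equiv.sum_comp e fun i => f i * g i
  have h1 : (1 : α → ℝ) = (1 : κ → ℝ) ∘ e := rfl
  simp only [h1, Function.comp_assoc, Equiv.self_comp_symm, Function.comp_id, hd]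

/-- The Sabot–Tarrès–Zeng integral, by eliminating the vertices one at a time. -/
lemma lintegral_potDens (ι : Type*) [Fintype ι] : ∀ (w : Matrix ι ι ℝ), w.IsHermitian →
    (∀ i j, 0 ≤ w i j) → (∀ i, w i i = 0) → ∀ η : ι → ℝ, (∀ i, 0 ≤ η i) →
    ∫⁻ b : ι → ℝ, potDens w η b = ENNReal.ofReal (√(2 * π)) ^ (Fintype.card ι) := by
  refine Fintype.induction_empty_option (P := fun ι [Fintype ι] => ∀ (w : Matrix ι ι ℝ),
    w.IsHermitian → (∀ i j, 0 ≤ w i j) → (∀ i, w i i = 0) → ∀ η : ι → ℝ, (∀ i, 0 ≤ η i) →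
    ∫⁻ b : ι → ℝ, potDens w η b = ENNReal.ofReal (√(2 * π)) ^ (Fintype.card ι)) ?_ ?_ ?_ ι
  · intro α κ _ e ih w hw hoff hdiag η hη
    let := Fintype.ofEquiv _ e.symm
    rw [← Fintype.card_congr e, lintegral_potDens_equiv e]
    exact ih (w.submatrix e e) (hw.submatrix _) (fun i j => hoff _ _) (fun i => hdiag _)
      (η ∘ e) (fun i => hη _)
  · intro w _ _ _ η _
    rw [volume_pi, Measure.pi_of_empty, lintegral_dirac]
    have hp : ∀ M : Matrix PEmpty PEmpty ℝ, M.PosDef := fun M =>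
      PosDef.of_dotProduct_mulVec_pos (by ext i; exact i.elim)
        fun x hx => absurd (Subsingleton.elim x 0) hx
    rw [potDens, if_pos (hp _)]
    simp [dotProduct]
  · intro α _ ih w hw hoff hdiag η hη
    let e : α ⊕ Unit ≃ Option α := (Equiv.optionEquivSumPUnit α).symm
    rw [lintegral_potDens_equiv e, Fintype.card_option]
    set w₀ : Matrix α α ℝ := w.submatrix some some
    set v : α → ℝ := fun i => w (some i) none
    have hw' : w.submatrix e e = bord w₀ (-v) 0 := by
      ext (i | i) (j | j)
      · simp [bord, w₀, e]
      · simp [bord, v, e]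
      · simpa [bord, v, e] using (hw.apply none (some j)).symm
      · simpa [bord, e] using hdiag none
    have hη' : η ∘ e = Sum.elim (η ∘ some) (fun _ => η none) := by
      ext (i | i) <;> simp [e]
    have hH : (bord w₀ (-v) 0).IsHermitian := hw' ▸ hw.submatrix e
    rw [hw', hη', ← (volume_measurePreserving_sumPiEquivProdPi_symm
        (fun _ : α ⊕ Unit => ℝ)).lintegral_comp_emb (MeasurableEquiv.measurableEmbedding _)]
    have hm : Measurable fun p : (α → ℝ) × (Unit → ℝ) => potDens (bord w₀ (-v) 0)
        (Sum.elim (η ∘ some) fun _ => η none)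
        ((MeasurableEquiv.sumPiEquivProdPi fun _ : α ⊕ Unit => ℝ).symm p) :=
      (measurable_potDens hH _).comp (MeasurableEquiv.measurable _)
    rw [Measure.volume_eq_prod, lintegral_prod _ hm.aemeasurable]
    have hstep : ∀ b : α → ℝ, ∫⁻ y : Unit → ℝ, potDens (bord w₀ (-v) 0)
        (Sum.elim (η ∘ some) fun _ => η none)
        ((MeasurableEquiv.sumPiEquivProdPi fun _ : α ⊕ Unit => ℝ).symm (b, y))
        = ENNReal.ofReal (√(2 * π)) * potDens w₀ (η ∘ some + v) b := by
      intro b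
      rw [← lintegral_potDens_step (w := w₀) (η := η ∘ some) v (fun i j => hoff _ _)
        (fun i => hoff _ _) (fun i => hη _) (hη none) b,
        ← (volume_preserving_funUnique Unit ℝ).symm.lintegral_comp_emb
        (MeasurableEquiv.measurableEmbedding _)]
      rfl
    simp_rw [hstep]
    have hw₀ : w₀.IsHermitian := hw.submatrix _
    rw [lintegral_const_mul _ (measurable_potDens hw₀ _), ih w₀ hw₀ (fun i j => hoff _ _)
      (fun i => hdiag _) (η ∘ some + v) (fun i => add_nonneg (hη _) (hoff _ _)), pow_succ, mul_comm]

end H22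

namespace H22

/-! ### The integral over the `t`-field -/

open scoped ENNReal
open Matrix

section ChangeVar

variable {ι : Type*} [Fintype ι] {w : Matrix ι ι ℝ} {η : ι → ℝ}

/-- The potential `b(t)` for which `e^t` solves `(diag(b) - w) e^t = η`. -/
noncomputable def pot (w : Matrix ι ι ℝ) (η t : ι → ℝ) : ι → ℝ :=
  fun i => ∑ j, w i j * exp (t j - t i) + η i * exp (-t i)

/-- The Laplacian with conductances `w_ij e^{t_i+t_j}` and killing rates `η_i e^{t_i}`. -/
noncomputable def lap (w : Matrix ι ι ℝ) (η t : ι → ℝ) : Matrix ι ι ℝ :=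
  diagonal (fun i => ∑ j, w i j * exp (t i + t j) + η i * exp (t i)) -
    of fun i j => w i j * exp (t i + t j)

/-- The energy of the `t`-field, with the sum over edges written over ordered pairs. -/
noncomputable def coshEnergy (w : Matrix ι ι ℝ) (η t : ι → ℝ) : ℝ :=
  1 / 2 * ∑ i, ∑ j, w i j * (cosh (t i - t j) - 1) + ∑ i, η i * (cosh (t i) - 1)

/-- Every connected component of the weighted graph `w` carries some killing `η`. -/
def Rooted (w : Matrix ι ι ℝ) (η : ι → ℝ) : Prop :=
  ∀ v : ι → ℝ, (∀ i j, 0 < w i j → v i = v j) → (∀ i, 0 < η i → v i = 0) → v = 0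

lemma lap_eq (t : ι → ℝ) : lap w η t = diagonal (fun i => exp (t i)) * schr w (pot w η t) *
    diagonal (fun i => exp (t i)) := by
  ext i j
  rw [mul_diagonal, diagonal_mul, lap, schr, Matrix.sub_apply, Matrix.sub_apply, of_apply]
  by_cases h : i = j
  · subst h
    simp only [diagonal_apply_eq, pot]
    have h1 : exp (t i) * exp (t i) = exp (t i + t i) := (Real.exp_add _ _).symm
    have h2 : ∀ j, exp (t i) * exp (t j - t i) * exp (t i) = exp (t i + t j) := fun j => by
      rw [← Real.exp_add, ← Real.exp_add]; congr 1; ring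
    have h3 : exp (t i) * exp (-t i) = 1 := by rw [← Real.exp_add]; simp
    rw [mul_sub, sub_mul, mul_add, add_mul, Finset.mul_sum, Finset.sum_mul]
    congr 1
    · congr 1
      · refine Finset.sum_congr rfl fun j _ => ?_
        rw [← h2 j]; ring
      · linear_combination (-(η i * exp (t i))) * h3
    · rw [← h1]; ring
  · rw [diagonal_apply_ne _ h, diagonal_apply_ne _ h, Real.exp_add]
    ring

lemma det_lap (t : ι → ℝ) :
    (lap w η t).det = (∏ i, exp (t i)) ^ 2 * (schr w (pot w η t)).det := by
  rw [lap_eq, det_mul, det_mul, det_diagonal]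
  ring

lemma lap_quadForm (hw : ∀ i j, w i j = w j i) (t v : ι → ℝ) :
    v ⬝ᵥ lap w η t *ᵥ v = 1 / 2 * ∑ i, ∑ j, w i j * exp (t i + t j) * (v i - v j) ^ 2 +
      ∑ i, η i * exp (t i) * v i ^ 2 := by
  have h1 : v ⬝ᵥ lap w η t *ᵥ v = ∑ i, ∑ j, w i j * exp (t i + t j) * (v i ^ 2 - v i * v j) +
      ∑ i, η i * exp (t i) * v i ^ 2 := by
    rw [lap, sub_mulVec, dotProduct_sub]
    simp only [dotProduct, mulVec_diagonal]
    simp only [mulVec, dotProduct, of_apply]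
    rw [← Finset.sum_sub_distrib, ← Finset.sum_add_distrib]
    refine Finset.sum_congr rfl fun i _ => ?_
    simp only [mul_sub, Finset.sum_sub_distrib, Finset.mul_sum, add_mul, mul_add, Finset.sum_mul]
    have e1 : ∑ j, v i * (w i j * exp (t i + t j) * v i)
        = ∑ j, w i j * exp (t i + t j) * v i ^ 2 :=
      Finset.sum_congr rfl fun j _ => by ring
    have e2 : ∑ j, v i * (w i j * exp (t i + t j) * v j)
        = ∑ j, w i j * exp (t i + t j) * (v i * v j) :=
      Finset.sum_congr rfl fun j _ => by ring
    rw [e1, e2]; ring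
  have h2 : ∑ i, ∑ j, w i j * exp (t i + t j) * (v i ^ 2 - v i * v j)
      = ∑ i, ∑ j, w i j * exp (t i + t j) * (v j ^ 2 - v i * v j) := by
    rw [Finset.sum_comm]
    refine Finset.sum_congr rfl fun i _ => Finset.sum_congr rfl fun j _ => ?_
    rw [hw j i, add_comm (t j)]; ring
  have h3 : ∑ i, ∑ j, w i j * exp (t i + t j) * (v i - v j) ^ 2 =
      ∑ i, ∑ j, w i j * exp (t i + t j) * (v i ^ 2 - v i * v j) +
      ∑ i, ∑ j, w i j * exp (t i + t j) * (v j ^ 2 - v i * v j) := by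
    simp only [← Finset.sum_add_distrib]
    refine Finset.sum_congr rfl fun i _ => Finset.sum_congr rfl fun j _ => ?_
    ring
  rw [h1, h3, ← h2]; ring

lemma lap_posDef (hw : ∀ i j, w i j = w j i) (h0 : ∀ i j, 0 ≤ w i j) (hη : ∀ i, 0 ≤ η i)
    (hr : Rooted w η) (t : ι → ℝ) : (lap w η t).PosDef := by
  refine PosDef.of_dotProduct_mulVec_pos ?_ fun v hv => ?_
  · ext i j
    simp only [lap, conjTranspose_apply, Matrix.sub_apply, of_apply, star_trivial]
    rw [hw j i, add_comm (t j)]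
    by_cases h : i = j
    · subst h; rfl
    · rw [diagonal_apply_ne _ h, diagonal_apply_ne _ (Ne.symm h)]
  · rw [star_trivial, lap_quadForm hw]
    have a1 : ∀ i j, 0 ≤ w i j * exp (t i + t j) * (v i - v j) ^ 2 := fun i j => by
      have := h0 i j; positivity
    have a2 : ∀ i, 0 ≤ η i * exp (t i) * v i ^ 2 := fun i => by
      have := hη i; positivity
    have b1 := Finset.sum_nonneg fun i (_ : i ∈ Finset.univ) =>
      Finset.sum_nonneg fun j (_ : j ∈ Finset.univ) => a1 i j
    have b2 := Finset.sum_nonneg fun i (_ : i ∈ Finset.univ) => a2 i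
    by_contra hcon
    apply hv
    refine hr v (fun i j hij => ?_) fun i hi => ?_
    · have c1 : ∑ i, ∑ j, w i j * exp (t i + t j) * (v i - v j) ^ 2 = 0 := by linarith
      rw [Finset.sum_eq_zero_iff_of_nonneg fun i _ => Finset.sum_nonneg fun j _ => a1 i j] at c1
      have c2 := c1 i (Finset.mem_univ _)
      rw [Finset.sum_eq_zero_iff_of_nonneg fun j _ => a1 i j] at c2
      have c3 := c2 j (Finset.mem_univ _)
      have := exp_pos (t i + t j)
      have c4 : v i - v j = 0 := by simpa [hij.ne', this.ne'] using c3
      linarith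
    · have c1 : ∑ i, η i * exp (t i) * v i ^ 2 = 0 := by linarith
      rw [Finset.sum_eq_zero_iff_of_nonneg fun i _ => a2 i] at c1
      have c3 := c1 i (Finset.mem_univ _)
      have := exp_pos (t i)
      simpa [hi.ne', this.ne'] using c3

lemma schr_pot_posDef (hw : ∀ i j, w i j = w j i) (h0 : ∀ i j, 0 ≤ w i j) (hη : ∀ i, 0 ≤ η i)
    (hr : Rooted w η) (t : ι → ℝ) : (schr w (pot w η t)).PosDef := by
  have h := lap_posDef hw h0 hη hr t
  have hD : (diagonal fun i => exp (-t i)) * (diagonal fun i => exp (t i)) = 1 := by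
    rw [diagonal_mul_diagonal]; simp [← Real.exp_add]
  have hD' : (diagonal fun i => exp (t i)) * (diagonal fun i => exp (-t i)) = 1 := by
    rw [diagonal_mul_diagonal]; simp [← Real.exp_add]
  have h2 := h.conjTranspose_mul_mul_same (B := diagonal fun i => exp (-t i)) (by
    intro a b hab
    have := congrArg (fun z => (diagonal fun i => exp (t i)) *ᵥ z) hab
    simpa [mulVec_mulVec, hD'] using this)
  rw [lap_eq] at h2
  have h3 : (diagonal fun i => exp (-t i))ᴴ = diagonal fun i => exp (-t i) := by simp
  rw [h3, ← Matrix.mul_assoc, ← Matrix.mul_assoc, hD, Matrix.one_mul, Matrix.mul_assoc, hD',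
    Matrix.mul_one] at h2
  exact h2

lemma schr_mulVec (b f : ι → ℝ) (i : ι) :
    (schr w b *ᵥ f) i = b i * f i - ∑ j, w i j * f j := by
  rw [schr, sub_mulVec, Pi.sub_apply, mulVec_diagonal]; rfl

lemma schr_pot_mulVec (t : ι → ℝ) :
    schr w (pot w η t) *ᵥ (fun i => exp (t i)) = η := by
  ext i
  rw [schr_mulVec, pot, add_mul, Finset.sum_mul, mul_assoc, ← Real.exp_add]
  have : ∀ j, w i j * exp (t j - t i) * exp (t i) = w i j * exp (t j) := fun j => by
    rw [mul_assoc, ← Real.exp_add]; congr 2; ring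
  simp [this]

lemma inv_schr_pot_mulVec {t : ι → ℝ} (hP : (schr w (pot w η t)).PosDef) :
    (schr w (pot w η t))⁻¹ *ᵥ η = fun i => exp (t i) := by
  have := congrArg (fun z => (schr w (pot w η t))⁻¹ *ᵥ z) (schr_pot_mulVec (w := w) (η := η) t)
  simp only [mulVec_mulVec,
    nonsing_inv_mul _ ((isUnit_iff_isUnit_det _).1 hP.isUnit), one_mulVec] at this
  exact this.symm

lemma pot_injective (hw : ∀ i j, w i j = w j i) (h0 : ∀ i j, 0 ≤ w i j) (hη : ∀ i, 0 ≤ η i)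
    (hr : Rooted w η) : Function.Injective (pot w η) := by
  intro t t' htt
  have h1 := inv_schr_pot_mulVec (schr_pot_posDef hw h0 hη hr t)
  rw [htt, inv_schr_pot_mulVec (schr_pot_posDef hw h0 hη hr t')] at h1
  ext i
  exact (Real.exp_injective (congrFun h1 i)).symm

/-- The potentials `b(t)` are exactly those with `diag(b) - w` positive definite: the inverse map is
`t = log ((diag(b) - w)⁻¹ η)`, and the solution is strictly positive because every component
carries some killing. -/
lemma range_pot (hw : ∀ i j, w i j = w j i) (h0 : ∀ i j, 0 ≤ w i j)
    (hη : ∀ i, 0 ≤ η i) (hr : Rooted w η) :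
    pot w η '' Set.univ = {b | (schr w b).PosDef} := by
  ext b
  simp only [Set.image_univ, Set.mem_range, Set.mem_ofPred_eq]
  constructor
  · rintro ⟨t, rfl⟩; exact schr_pot_posDef hw h0 hη hr t
  intro hP
  set ψ := (schr w b)⁻¹ *ᵥ η with hψ
  have hHψ : schr w b *ᵥ ψ = η := by
    rw [hψ, mulVec_mulVec, mul_nonsing_inv _ ((isUnit_iff_isUnit_det _).1 hP.isUnit), one_mulVec]
  have hnn : ∀ i, 0 ≤ ψ i := nonneg_of_mulVec_nonneg hP (fun i j hij => by
    rw [schr, Matrix.sub_apply, diagonal_apply_ne _ hij]; linarith [h0 i j])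
    (fun i => by rw [hHψ]; exact hη i)
  have hz : ∀ i, ψ i = 0 → η i = 0 ∧ ∀ j, 0 < w i j → ψ j = 0 := by
    intro i hi
    have h := congrFun hHψ i
    rw [schr_mulVec, hi, mul_zero, zero_sub] at h
    have hs := Finset.sum_nonneg fun j (_ : j ∈ Finset.univ) => mul_nonneg (h0 i j) (hnn j)
    have h1 : ∑ j, w i j * ψ j = 0 := by linarith [hη i]
    refine ⟨by linarith, fun j hj => ?_⟩
    rw [Finset.sum_eq_zero_iff_of_nonneg fun j _ => mul_nonneg (h0 i j) (hnn j)] at h1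
    simpa [hj.ne'] using h1 j (Finset.mem_univ _)
  -- The zero set of `ψ` is a union of components without killing, hence empty.
  have hv := hr (fun i => if ψ i = 0 then 1 else 0) (fun i j hij => by
      have : ψ i = 0 ↔ ψ j = 0 :=
        ⟨fun h => (hz i h).2 j hij, fun h => (hz j h).2 i (hw i j ▸ hij)⟩
      simp only [this]) (fun i hi => by
      rw [if_neg fun h => hi.ne' (hz i h).1])
  have hpos : ∀ i, 0 < ψ i := fun i => (hnn i).lt_of_ne fun h => by
    have := congrFun hv i
    simp [← h] at this
  refine ⟨fun i => log (ψ i), ?_⟩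
  ext i
  have h := congrFun hHψ i
  rw [schr_mulVec] at h
  simp only [pot, Real.exp_sub, Real.exp_neg, Real.exp_log (hpos _)]
  have h2 : ∑ j, w i j * (ψ j / ψ i) = (∑ j, w i j * ψ j) / ψ i := by
    rw [Finset.sum_div]; exact Finset.sum_congr rfl fun j _ => by ring
  have := (hpos i).ne'
  rw [h2, ← h]
  field_simp
  ring

/-- The Jacobian matrix of `t ↦ b(t)` is `-e^{-t} (diag(b(t)) - w) e^{t}`. -/
lemma hasFDerivAt_pot (t : ι → ℝ) :
    HasFDerivAt (pot w η) (LinearMap.toContinuousLinearMap (Matrix.toLin'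
      (-(diagonal (fun i => exp (-t i)) * schr w (pot w η t) * diagonal fun i => exp (t i))))) t := by
  rw [hasFDerivAt_pi']
  intro i
  have hp : ∀ j : ι, HasFDerivAt (fun t : ι → ℝ => t j)
      (ContinuousLinearMap.proj j : (ι → ℝ) →L[ℝ] ℝ) t :=
    fun j => hasFDerivAt_apply j t
  have h1 := (HasFDerivAt.fun_sum (u := Finset.univ) fun j _ =>
    (((hp j).sub (hp i)).exp.const_mul (w i j))).add ((hp i).neg.exp.const_mul (η i))
  refine h1.congr_fderiv ?_
  ext v
  simp only [_root_.add_apply, _root_.sum_apply,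
    _root_.smul_apply, _root_.sub_apply, _root_.neg_apply,
    ContinuousLinearMap.proj_apply, ContinuousLinearMap.comp_apply,
    LinearMap.coe_toContinuousLinearMap', Matrix.toLin'_apply, neg_mulVec, Pi.neg_apply,
    ← mulVec_mulVec, mulVec_diagonal, schr_mulVec, smul_eq_mul, Pi.sub_apply]
  rw [pot, mul_sub, Finset.mul_sum, add_mul, mul_add, Finset.sum_mul, Finset.mul_sum]
  have e1 : exp (-t i) * exp (t i) = 1 := by rw [← Real.exp_add]; simp
  have e2 : ∀ j, exp (t j - t i) = exp (-t i) * exp (t j) := fun j => by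
    rw [← Real.exp_add]; congr 1; ring
  simp only [e2, mul_sub, Finset.sum_sub_distrib]
  have s1 : ∑ j, w i j * (exp (-t i) * exp (t j) * v j) = ∑ j, exp (-t i) * (w i j * (exp (t j) * v j)) :=
    Finset.sum_congr rfl fun j _ => by ring
  have s2 : ∑ j, w i j * (exp (-t i) * exp (t j) * v i)
      = ∑ j, exp (-t i) * (w i j * (exp (-t i) * exp (t j)) * (exp (t i) * v i)) :=
    Finset.sum_congr rfl fun j _ => by
      linear_combination (-(w i j * exp (-t i) * exp (t j) * v i)) * e1
  simp only [s1, s2]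
  linear_combination ((η i) * exp (-t i) * v i) * e1

/-- The Sabot–Tarrès–Zeng integral in the `t`-coordinates. -/
lemma lintegral_tField (hw : ∀ i j, w i j = w j i) (h0 : ∀ i j, 0 ≤ w i j) (hd : ∀ i, w i i = 0)
    (hη : ∀ i, 0 ≤ η i) (hr : Rooted w η) :
    ∫⁻ t : ι → ℝ, ENNReal.ofReal ((∏ i, exp (-t i)) * exp (-coshEnergy w η t) *
      √(lap w η t).det) = ENNReal.ofReal (√(2 * π)) ^ (Fintype.card ι) := by
  have hH : w.IsHermitian := by ext i j; simpa using hw j i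
  rw [← lintegral_potDens ι w hH h0 hd η hη]
  have h1 : ∫⁻ b : ι → ℝ, potDens w η b = ∫⁻ b in pot w η '' Set.univ, potDens w η b := by
    rw [range_pot hw h0 hη hr, ← lintegral_indicator (measurableSet_schr_posDef hH)]
    refine lintegral_congr fun b => ?_
    by_cases h : (schr w b).PosDef
    · rw [Set.indicator_of_mem (by exact h)]
    · rw [Set.indicator_of_notMem (by exact h), potDens, if_neg h]
  rw [h1, lintegral_image_eq_lintegral_abs_det_fderiv_mul volume MeasurableSet.univ
    (fun t _ => (hasFDerivAt_pot t).hasFDerivWithinAt)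
    (pot_injective hw h0 hη hr).injOn, Measure.restrict_univ]
  refine lintegral_congr fun t => ?_
  have hP := schr_pot_posDef hw h0 hη hr t
  rw [potDens, if_pos hP, ← ENNReal.ofReal_mul (abs_nonneg _)]
  congr 1
  have hprod : (∏ i, exp (-t i)) * ∏ i, exp (t i) = 1 := by
    rw [← Finset.prod_mul_distrib]; simp [← Real.exp_add]
  have hpp : 0 < ∏ i, exp (t i) := Finset.prod_pos fun i _ => exp_pos _
  have hdet : |(LinearMap.toContinuousLinearMap (Matrix.toLin'
      (-(diagonal (fun i => exp (-t i)) * schr w (pot w η t) * diagonal fun i => exp (t i))))).det|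
      = (schr w (pot w η t)).det := by
    rw [ContinuousLinearMap.det, LinearMap.coe_toContinuousLinearMap, LinearMap.det_toLin',
      det_neg, det_mul, det_mul, det_diagonal, det_diagonal, abs_mul, abs_pow, abs_neg, abs_one,
      one_pow, one_mul, mul_right_comm, hprod, one_mul, abs_of_pos hP.det_pos]
  rw [hdet, det_lap, Real.sqrt_mul (by positivity), Real.sqrt_sq hpp.le, inv_schr_pot_mulVec hP]
  have hsq := Real.mul_self_sqrt hP.det_pos.le
  have hsp := Real.sqrt_pos.2 hP.det_pos
  have hexp : -coshEnergy w η t = -(1 / 2) * (1 ⬝ᵥ schr w (pot w η t) *ᵥ 1) -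
      1 / 2 * (η ⬝ᵥ fun i => exp (t i)) + η ⬝ᵥ 1 := by
    have q1 : (1 : ι → ℝ) ⬝ᵥ schr w (pot w η t) *ᵥ 1
        = ∑ i, ∑ j, w i j * (exp (t j - t i) - 1) + ∑ i, η i * exp (-t i) := by
      simp only [dotProduct, schr_mulVec, pot, Pi.one_apply, one_mul, mul_one, mul_sub,
        Finset.sum_sub_distrib, Finset.sum_add_distrib]
      ring
    have q2 : ∑ i, ∑ j, w i j * (exp (t j - t i) - 1)
        = ∑ i, ∑ j, w i j * (exp (t i - t j) - 1) := by
      rw [Finset.sum_comm]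
      refine Finset.sum_congr rfl fun i _ => Finset.sum_congr rfl fun j _ => ?_
      rw [hw]
    have q3 : ∑ i, ∑ j, w i j * (cosh (t i - t j) - 1)
        = 1 / 2 * ∑ i, ∑ j, w i j * (exp (t j - t i) - 1) +
          1 / 2 * ∑ i, ∑ j, w i j * (exp (t i - t j) - 1) := by
      simp only [Finset.mul_sum, ← Finset.sum_add_distrib]
      refine Finset.sum_congr rfl fun i _ => Finset.sum_congr rfl fun j _ => ?_
      rw [Real.cosh_eq, neg_sub]; ring
    have q4 : ∑ i, η i * (cosh (t i) - 1) = 1 / 2 * ∑ i, η i * exp (-t i)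
        + 1 / 2 * (η ⬝ᵥ fun i => exp (t i)) - η ⬝ᵥ 1 := by
      simp only [dotProduct, Finset.mul_sum, ← Finset.sum_add_distrib, ← Finset.sum_sub_distrib]
      refine Finset.sum_congr rfl fun i _ => ?_
      rw [Real.cosh_eq, Pi.one_apply]; ring
    rw [coshEnergy, q1, q3, q4, ← q2]; ring
  rw [hexp]
  rw [mul_div_assoc', mul_comm (schr w (pot w η t)).det, mul_div_assoc]
  rw [show (schr w (pot w η t)).det / √(schr w (pot w η t)).det = √(schr w (pot w η t)).det by
    rw [div_eq_iff hsp.ne', hsq]]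
  rw [mul_right_comm, ← mul_assoc, hprod, one_mul, mul_comm]

end ChangeVar

end H22

namespace H22

/-! ### The matrix-tree theorem -/

open Matrix

section MatrixTree

variable {V : Type*} [Fintype V]

/-- A parent map `p` on `V` with values in `V` or the root `none` is acyclic if it strictly
decreases some height function. -/
def AcycMap (p : V → Option V) : Prop := ∃ h : Option V → ℕ, ∀ i, h (p i) < h (some i)

/-- The matrix `1 - P`, where `P` is the (sub-stochastic) transition matrix of the map `p`. -/
noncomputable def mapMat (p : V → Option V) : Matrix V V ℝ :=
  of fun i j => (if i = j then 1 else 0) - (if p i = some j then 1 else 0)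

lemma det_mapMat_of_acyc {p : V → Option V} (hp : AcycMap p) : (mapMat p).det = 1 := by
  obtain ⟨h, hh⟩ := hp
  have hz : ∀ i j, i ≠ j → h (some i) ≤ h (some j) → mapMat p i j = 0 := by
    intro i j hij hle
    have : p i ≠ some j := fun h' => by
      have := hh i
      rw [h'] at this
      omega
    simp [mapMat, hij, this]
  -- Ordering the vertices by decreasing height makes `1 - P` triangular.
  have htri : (mapMat p).BlockTriangular (fun i => OrderDual.toDual (h (some i))) := by
    intro i j hij
    have hij' : h (some i) < h (some j) := hij
    exact hz i j (fun h' => by subst h'; omega) hij'.le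
  rw [htri.det]
  refine Finset.prod_eq_one fun a _ => ?_
  have : (mapMat p).toSquareBlock (fun i => OrderDual.toDual (h (some i))) a = 1 := by
    ext ⟨i, hi⟩ ⟨j, hj⟩
    by_cases hij : i = j
    · subst hij
      have : p i ≠ some i := fun h' => by
        have := hh i
        rw [h'] at this
        omega
      simp [toSquareBlock, toSquareBlockProp, mapMat, this]
    · have hij' : h (some i) = h (some j) := OrderDual.toDual.injective (hi.trans hj.symm)
      have := hz i j hij hij'.le
      simpa [toSquareBlock, toSquareBlockProp, Matrix.one_apply, hij] using this
  rw [this, det_one]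

/-- If some orbit of `p` avoids the root, then the indicator of the set of such starting points is
in the kernel of `1 - P`. -/
lemma det_mapMat_of_not_acyc {p : V → Option V} (hp : ¬ AcycMap p) : (mapMat p).det = 0 := by
  set q : Option V → Option V := fun a => a.elim none p with hq
  have hS : ∃ i, ∀ k, q^[k] (some i) ≠ none := by
    by_contra! hcon
    have hex : ∀ a : Option V, ∃ k, q^[k] a = none := fun a => by
      cases a with
      | none => exact ⟨0, rfl⟩
      | some i => exact hcon i
    refine hp ⟨fun a => Nat.find (hex a), fun i => ?_⟩
    have h1 := Nat.find_spec (hex (some i))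
    obtain ⟨m, hm⟩ : ∃ m, Nat.find (hex (some i)) = m + 1 := by
      refine Nat.exists_eq_succ_of_ne_zero fun h0 => ?_
      rw [h0] at h1
      simp at h1
    rw [hm, Function.iterate_succ_apply] at h1
    have h2 : Nat.find (hex (p i)) ≤ m := Nat.find_min' _ h1
    show Nat.find (hex (p i)) < Nat.find (hex (some i))
    omega
  obtain ⟨i₀, hi₀⟩ := hS
  refine exists_mulVec_eq_zero_iff.1
    ⟨fun i => if ∀ k, q^[k] (some i) ≠ none then 1 else 0, fun h0 => ?_, ?_⟩
  · have := congrFun h0 i₀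
    rw [Pi.zero_apply, if_pos hi₀] at this
    exact one_ne_zero this
  · ext i
    simp only [mulVec, dotProduct, mapMat, of_apply, sub_mul, Finset.sum_sub_distrib, ite_mul,
      one_mul, zero_mul, Finset.sum_ite_eq, Finset.mem_univ, if_true, Pi.zero_apply]
    cases hpi : p i with
    | none =>
      have : ¬ ∀ k, q^[k] (some i) ≠ none := fun h => h 1 (by simp [hq, hpi])
      simp [this]
    | some j =>
      have : (∀ k, q^[k] (some i) ≠ none) ↔ ∀ k, q^[k] (some j) ≠ none := by
        constructor
        · intro h k
          have := h (k + 1)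
          rwa [Function.iterate_succ_apply, show q (some i) = some j from hpi] at this
        · intro h k
          cases k with
          | zero => simp
          | succ k =>
            rw [Function.iterate_succ_apply, show q (some i) = some j from hpi]
            exact h k
      simp only [this, Option.some.injEq, Finset.sum_ite_eq, Finset.mem_univ, if_true, sub_self]

/-- Expansion of a (root-reduced) Laplacian determinant over acyclic parent maps, from
multilinearity of the determinant in the rows. -/
lemma det_laplacian_eq_sum_acyc (W : V → Option V → ℝ) :
    (of fun i j => (if i = j then ∑ p, W i p else 0) - W i (some j) : Matrix V V ℝ).det
      = ∑ p : V → Option V, if AcycMap p then ∏ i, W i (p i) else 0 := by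
  have hrow : (of fun i j => (if i = j then ∑ p, W i p else 0) - W i (some j) : Matrix V V ℝ)
      = of fun i => ∑ p : Option V, W i p •
        (fun j => (if i = j then 1 else 0) - (if p = some j then 1 else 0) : V → ℝ) := by
    ext i j
    simp only [of_apply, Finset.sum_apply, Pi.smul_apply, smul_eq_mul, mul_sub,
      Finset.sum_sub_distrib, mul_ite, mul_one, mul_zero, Finset.sum_ite_eq', Finset.mem_univ,
      if_true]
    congr 1
    split_ifs <;> simp
  rw [hrow]
  have h1 := (detRowAlternating (n := V) (R := ℝ)).toMultilinearMap.map_sum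
    (fun i (p : Option V) => W i p •
        (fun j => (if i = j then 1 else 0) - (if p = some j then 1 else 0) : V → ℝ))
  refine h1.trans (Finset.sum_congr rfl fun p _ => ?_)
  rw [MultilinearMap.map_smul_univ]
  change (∏ i, W i (p i)) • (mapMat p).det = _
  split_ifs with hp
  · rw [det_mapMat_of_acyc hp, smul_eq_mul, mul_one]
  · rw [det_mapMat_of_not_acyc hp, smul_zero]

/-- The edge set traced by a parent map. -/
noncomputable def mapEdges (p : V → Option V) : Finset (Sym2 (Option V)) :=
  Finset.univ.image fun i => s(some i, p i)

lemma mem_mapEdges (p : V → Option V) (i : V) : s(some i, p i) ∈ mapEdges p :=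
  Finset.mem_image_of_mem (fun i => s(some i, p i)) (Finset.mem_univ i)

omit [Fintype V] in
lemma mapEdges_injective {p : V → Option V} (hp : AcycMap p) :
    Function.Injective fun i => s(some i, p i) := by
  obtain ⟨h, hh⟩ := hp
  intro i j hij
  rcases Sym2.eq_iff.1 hij with ⟨h1, _⟩ | ⟨h1, h2⟩
  · exact Option.some.inj h1
  · have a := hh i
    have b := hh j
    rw [h2] at a
    rw [← h1] at b
    omega

lemma card_mapEdges {p : V → Option V} (hp : AcycMap p) :
    (mapEdges p).card = Fintype.card V := by
  rw [mapEdges, Finset.card_image_of_injective _ (mapEdges_injective hp), Finset.card_univ]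

lemma prod_mapEdges {p : V → Option V} (hp : AcycMap p) (f : Sym2 (Option V) → ℝ) :
    ∏ e ∈ mapEdges p, f e = ∏ i, f s(some i, p i) := by
  rw [mapEdges, Finset.prod_image fun i _ j _ hij => mapEdges_injective hp hij]

lemma isSpanningTree_mapEdges {H : SimpleGraph (Option V)} {p : V → Option V} (hp : AcycMap p)
    (hadj : ∀ i, H.Adj (some i) (p i)) : IsSpanningTree H (mapEdges p) := by
  have hsub : (↑(mapEdges p) : Set (Sym2 (Option V))) ⊆ H.edgeSet := by
    intro e he
    simp only [mapEdges, Finset.coe_image, Finset.coe_univ, Set.image_univ, Set.mem_range] at he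
    obtain ⟨i, rfl⟩ := he
    exact hadj i
  refine ⟨hsub, SimpleGraph.isTree_iff_connected_and_card.2 ⟨?_, ?_⟩⟩
  · obtain ⟨h, hh⟩ := hp
    have hreach : ∀ n, ∀ a : Option V, h a ≤ n → (SimpleGraph.fromEdgeSet
        (↑(mapEdges p) : Set (Sym2 (Option V)))).Reachable a none := by
      intro n
      induction n with
      | zero =>
        intro a ha
        cases a with
        | none => rfl
        | some i => have := hh i; omega
      | succ n ih =>
        intro a ha
        cases a with
        | none => rfl
        | some i =>
          refine SimpleGraph.Reachable.trans (SimpleGraph.Adj.reachable ?_)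
            (ih (p i) (by have := hh i; omega))
          rw [SimpleGraph.fromEdgeSet_adj]
          exact ⟨Finset.mem_coe.2 (mem_mapEdges p i), (hadj i).ne⟩
    exact SimpleGraph.Connected.mk fun a b =>
      (hreach _ a le_rfl).trans (hreach _ b le_rfl).symm
  · have : (SimpleGraph.fromEdgeSet (↑(mapEdges p) : Set (Sym2 (Option V)))).edgeSet
        = ↑(mapEdges p) := by
      rw [SimpleGraph.edgeSet_fromEdgeSet, sdiff_eq_left]
      exact Set.disjoint_left.2 fun e he hd => SimpleGraph.not_isDiag_of_mem_edgeSet _ (hsub he) hd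
    rw [this]
    simp [card_mapEdges hp]

/-- The parent map is determined by the edges it traces: orient them towards the root, by induction
on the height. -/
lemma mapEdges_inj {p q : V → Option V} (hp : AcycMap p) (hpq : mapEdges p = mapEdges q) :
    p = q := by
  obtain ⟨h, hh⟩ := hp
  have key : ∀ n i, h (some i) ≤ n → p i = q i := by
    intro n
    induction n with
    | zero => intro i hi; have := hh i; omega
    | succ n ih =>
      intro i hi
      have hmem : s(some i, p i) ∈ mapEdges q := by
        rw [← hpq]; exact mem_mapEdges p i
      simp only [mapEdges, Finset.mem_image, Finset.mem_univ, true_and] at hmem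
      obtain ⟨k, hk⟩ := hmem
      rcases Sym2.eq_iff.1 hk with ⟨h1, h2⟩ | ⟨h1, h2⟩
      · rw [← h2, Option.some.inj h1]
      · have a := hh i
        rw [← h1] at a
        have b := hh k
        rw [ih k (by omega), h2] at b
        omega
  ext1 i
  exact key _ i le_rfl

/-- Every spanning tree is traced by the map sending a vertex to a neighbour closer to the root. -/
lemma exists_acycMap {H : SimpleGraph (Option V)} {T : Finset (Sym2 (Option V))}
    (hT : IsSpanningTree H T) :
    ∃ p : V → Option V, AcycMap p ∧ (∀ i, H.Adj (some i) (p i)) ∧ mapEdges p = T := by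
  obtain ⟨hsub, htree⟩ := hT
  set F := SimpleGraph.fromEdgeSet (↑T : Set (Sym2 (Option V))) with hF
  have hstep : ∀ i : V, ∃ b, F.Adj (some i) b ∧ F.dist b none < F.dist (some i) none := by
    intro i
    obtain ⟨w, hw⟩ := htree.connected.exists_walk_length_eq_dist (some i) none
    cases w with
    | cons hadj w' =>
      refine ⟨_, hadj, ?_⟩
      rw [← hw, SimpleGraph.Walk.length_cons]
      exact Nat.lt_succ_of_le (SimpleGraph.dist_le w')
  choose p hp1 hp2 using hstep
  have hac : AcycMap p := ⟨fun a => F.dist a none, hp2⟩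
  have hmemT : ∀ i, s(some i, p i) ∈ T := fun i => by
    have := hp1 i
    rw [hF, SimpleGraph.fromEdgeSet_adj] at this
    exact_mod_cast this.1
  refine ⟨p, hac, fun i => hsub (hmemT i), ?_⟩
  apply Finset.eq_of_subset_of_card_le
  · intro e he
    simp only [mapEdges, Finset.mem_image, Finset.mem_univ, true_and] at he
    obtain ⟨i, rfl⟩ := he
    exact hmemT i
  · have h1 := (SimpleGraph.isTree_iff_connected_and_card.1 htree).2
    have h2 : F.edgeSet = ↑T := by
      rw [hF, SimpleGraph.edgeSet_fromEdgeSet, sdiff_eq_left]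
      exact Set.disjoint_left.2 fun e he hd => SimpleGraph.not_isDiag_of_mem_edgeSet _ (hsub he) hd
    rw [h2] at h1
    simp at h1
    rw [card_mapEdges hac, h1]

/-- The matrix-tree theorem, with the row and column of the root `none` removed. -/
lemma matrix_tree {d : DecidableEq (Option V)} (H : SimpleGraph (Option V))
    (c : Option V → Option V → ℝ) (hc : ∀ a b, c a b = c b a) :
    (of fun i j => (if i = j then ∑ p, (if H.Adj (some i) p then c (some i) p else 0) else 0) -
      (if H.Adj (some i) (some j) then c (some i) (some j) else 0) : Matrix V V ℝ).det
      = ∑ T ∈ @STrees _ _ d H, ∏ e ∈ T, esym c e := by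
  have h := det_laplacian_eq_sum_acyc fun (i : V) p => if H.Adj (some i) p then c (some i) p else 0
  have h' : ∀ p : V → Option V,
      (if AcycMap p then ∏ i, (if H.Adj (some i) (p i) then c (some i) (p i) else 0) else 0)
      = if AcycMap p ∧ ∀ i, H.Adj (some i) (p i) then ∏ e ∈ mapEdges p, esym c e else 0 := by
    intro p
    by_cases hp : AcycMap p
    swap
    · simp [hp]
    by_cases ha : ∀ i, H.Adj (some i) (p i)
    · rw [if_pos hp, if_pos ⟨hp, ha⟩, prod_mapEdges hp]
      refine Finset.prod_congr rfl fun i _ => ?_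
      rw [if_pos (ha i)]
      simp only [esym, Sym2.lift_mk]
      rw [hc (p i)]; ring
    · rw [if_pos hp, if_neg fun h => ha h.2]
      push Not at ha
      obtain ⟨i, hi⟩ := ha
      exact Finset.prod_eq_zero (Finset.mem_univ i) (if_neg hi)
  simp only [h'] at h
  rw [← Finset.sum_filter] at h
  refine h.trans ?_
  · refine Finset.sum_bij (fun p _ => mapEdges p) ?_ ?_ ?_ ?_
    · intro p hp
      rw [Finset.mem_filter] at hp
      simp only [STrees, Finset.mem_filter, Finset.mem_univ, true_and]
      exact isSpanningTree_mapEdges hp.2.1 hp.2.2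
    · intro p hp q hq hpq
      rw [Finset.mem_filter] at hp
      exact mapEdges_inj hp.2.1 hpq
    · intro T hT
      simp only [STrees, Finset.mem_filter, Finset.mem_univ, true_and] at hT
      obtain ⟨p, h1, h2, h3⟩ := exists_acycMap hT
      exact ⟨p, by simp [h1, h2], h3⟩
    · intro p _; rfl

end MatrixTree

end H22

namespace H22

/-! ### Energies and total mass of the augmented graph -/

open scoped ENNReal
open Matrix

section Augmented

variable {V : Type*} {G : SimpleGraph V}

@[simp] lemma aug_adj_some_some {i j : V} : (aug G).Adj (some i) (some j) ↔ G.Adj i j := by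
  simp only [aug, SimpleGraph.fromRel_adj]
  constructor
  · rintro ⟨_, h | h⟩
    · exact h
    · exact h.symm
  · intro h
    exact ⟨fun h' => h.ne (Option.some.inj h'), Or.inl h⟩

@[simp] lemma aug_adj_some_none {i : V} : (aug G).Adj (some i) none := by
  simp [aug, SimpleGraph.fromRel_adj]

@[simp] lemma aug_adj_none_some {i : V} : (aug G).Adj none (some i) := by
  simp [aug, SimpleGraph.fromRel_adj]

/-- A sum over the edges of a graph is half the sum over its ordered adjacent pairs. -/
lemma sum_edges_eq {α : Type*} [Fintype α] {_ : Fintype (Sym2 α)} (H : SimpleGraph α)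
    {_ : DecidablePred fun e => e ∈ H.edgeSet} (f : α → α → ℝ) :
    ∑ e ∈ Finset.univ.filter (fun e : Sym2 α => e ∈ H.edgeSet), esym f e
      = 1 / 2 * ∑ a, ∑ b, if H.Adj a b then f a b else 0 := by
  have h1 : ∑ a, ∑ b, (if H.Adj a b then f a b else 0)
      = ∑ q ∈ Finset.univ.filter (fun q : α × α => H.Adj q.1 q.2), f q.1 q.2 := by
    rw [Finset.sum_filter, ← Finset.univ_product_univ, Finset.sum_product]
  rw [h1, ← Finset.sum_fiberwise_of_maps_to
    (t := Finset.univ.filter (fun e : Sym2 α => e ∈ H.edgeSet)) (g := fun q : α × α => s(q.1, q.2))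
    (fun q hq => by simpa using hq), Finset.mul_sum]
  refine Finset.sum_congr rfl fun e he => ?_
  induction e using Sym2.ind with
  | _ a b =>
    have hab : H.Adj a b := by simpa using he
    have hne := hab.ne
    have hfib : (Finset.univ.filter fun q : α × α => H.Adj q.1 q.2).filter
        (fun q => s(q.1, q.2) = s(a, b)) = {(a, b), (b, a)} := by
      ext ⟨c, d⟩
      simp only [Finset.mem_filter, Finset.mem_univ, true_and, Sym2.eq_iff, Finset.mem_insert,
        Finset.mem_singleton, Prod.mk.injEq]
      constructor
      · exact fun h => h.2
      · rintro (⟨rfl, rfl⟩ | ⟨rfl, rfl⟩)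
        · exact ⟨hab, Or.inl ⟨rfl, rfl⟩⟩
        · exact ⟨hab.symm, Or.inr ⟨rfl, rfl⟩⟩
    rw [hfib, Finset.sum_pair (by simp [hne])]
    simp only [esym, Sym2.lift_mk]
    ring

/-- The conductance matrix of `G`. -/
noncomputable def wmat (G : SimpleGraph V) (β : V → V → ℝ) : Matrix V V ℝ :=
  of fun i j => if G.Adj i j then β i j else 0

lemma wmat_symm {β : V → V → ℝ} (hβ : ∀ i j, β i j = β j i) (i j : V) :
    wmat G β i j = wmat G β j i := by
  simp only [wmat, of_apply, hβ i j, G.adj_comm i j]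

lemma wmat_nonneg {β : V → V → ℝ} (hβ : ∀ i j, G.Adj i j → 0 < β i j) (i j : V) :
    0 ≤ wmat G β i j := by
  simp only [wmat, of_apply]
  split_ifs with h
  · exact (hβ i j h).le
  · exact le_rfl

lemma singlePin_eq {_ : DecidableEq V} (x : V) (c : ℝ) (i : V) :
    singlePin x c i = if i = x then c else 0 := by
  unfold singlePin; congr

lemma singlePin_nonneg {_ : DecidableEq V} {x : V} {c : ℝ} (hc : 0 < c) (i : V) :
    0 ≤ singlePin x c i := by
  unfold singlePin
  split_ifs
  · exact hc.le
  · exact le_rfl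

lemma rooted_wmat [Fintype V] {_ : DecidableEq V} (hG : G.Connected) {β : V → V → ℝ}
    (hβ : ∀ i j, G.Adj i j → 0 < β i j) {x : V} {c : ℝ} (hc : 0 < c) :
    Rooted (wmat G β) (singlePin x c) := by
  intro v h1 h2
  have hx : v x = 0 := h2 x (by simp [singlePin, hc])
  ext i
  obtain ⟨p⟩ := hG.preconnected i x
  rw [Pi.zero_apply]
  induction p with
  | nil => exact hx
  | cons hadj _ ih =>
    rw [h1 _ _ (show 0 < wmat G β _ _ by rw [wmat, of_apply, if_pos hadj]; exact hβ _ _ hadj)]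
    exact ih h2 hx

variable [Fintype V]

/-- The energy of the edges of `G`, written over ordered pairs. -/
noncomputable def bulkEnergy (G : SimpleGraph V) (β : V → V → ℝ) (t s : V → ℝ) : ℝ :=
  1 / 2 * ∑ i, ∑ j, wmat G β i j * (Bfun t s (some i) (some j) - 1)

/-- The energy of the edge between the root and a vertex with field value `(τ, σ)`, per unit of
pinning. -/
noncomputable def rootEnergy (τ σ : ℝ) : ℝ := cosh τ - 1 + 1 / 2 * σ ^ 2 * exp τ

omit [Fintype V] in
lemma Bfun_comm (t s : V → ℝ) (a b : Option V) : Bfun t s a b = Bfun t s b a := by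
  unfold Bfun
  rw [← Real.cosh_neg, neg_sub, add_comm (extV t b)]
  ring

omit [Fintype V] in
lemma bres_comm {β : V → V → ℝ} (hβ : ∀ i j, β i j = β j i) (ε : V → ℝ) (a b : Option V) :
    bres β ε a b = bres β ε b a := by
  cases a <;> cases b <;> simp [bres, hβ]

omit [Fintype V] in
lemma Bfun_root (t s : V → ℝ) (i : V) :
    Bfun t s (some i) none - 1 = rootEnergy (t i) (s i) := by
  simp [Bfun, extV, rootEnergy]; ring

lemma prod_gibbs {_ : Fintype (Sym2 (Option V))}
    {_ : DecidablePred fun e => e ∈ (aug G).edgeSet} {β : V → V → ℝ} (hβ : ∀ i j, β i j = β j i)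
    (ε t s : V → ℝ) :
    ∏ e ∈ Finset.univ.filter (fun e : Sym2 (Option V) => e ∈ (aug G).edgeSet), gibbs β ε t s e
      = exp (-(bulkEnergy G β t s + ∑ i, ε i * rootEnergy (t i) (s i))) := by
  have h1 : ∀ e, gibbs β ε t s e
      = exp (esym (fun a b => -(bres β ε a b * (Bfun t s a b - 1))) e) := by
    intro e
    induction e using Sym2.ind with
    | _ a b =>
      simp only [gibbs, esym, Sym2.lift_mk]
      rw [Bfun_comm t s b a, bres_comm hβ ε b a]
      simp
  simp only [h1]
  rw [← Real.exp_sum, sum_edges_eq]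
  congr 1
  simp only [Fintype.sum_option, aug_adj_some_some, aug_adj_some_none, aug_adj_none_some, if_true,
    SimpleGraph.irrefl, if_false]
  simp only [Bfun_comm t s none, Bfun_root, bres, Finset.sum_add_distrib, bulkEnergy,
    Finset.sum_neg_distrib]
  have h2 : ∀ i j : V, (if G.Adj i j then -(β i j * (Bfun t s (some i) (some j) - 1)) else 0)
      = -(wmat G β i j * (Bfun t s (some i) (some j) - 1)) := by
    intro i j
    simp only [wmat, of_apply]
    split_ifs <;> simp
  simp only [h2, Finset.sum_neg_distrib]
  ring

/-- The total energy is the energy of the `t`-field plus a quadratic form in `s` given by the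
Laplacian. -/
lemma energy_eq {β : V → V → ℝ} (hβ : ∀ i j, β i j = β j i) (ε t s : V → ℝ) :
    bulkEnergy G β t s + ∑ i, ε i * rootEnergy (t i) (s i)
      = coshEnergy (wmat G β) ε t + 1 / 2 * (s ⬝ᵥ lap (wmat G β) ε t *ᵥ s) := by
  rw [lap_quadForm (wmat_symm hβ), bulkEnergy, coshEnergy]
  have h1 : ∑ i, ε i * rootEnergy (t i) (s i) = ∑ i, ε i * (cosh (t i) - 1)
      + 1 / 2 * ∑ i, ε i * exp (t i) * s i ^ 2 := by
    rw [Finset.mul_sum, ← Finset.sum_add_distrib]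
    refine Finset.sum_congr rfl fun i _ => ?_
    rw [rootEnergy]; ring
  have h2 : ∑ i, ∑ j, wmat G β i j * (Bfun t s (some i) (some j) - 1)
      = ∑ i, ∑ j, wmat G β i j * (cosh (t i - t j) - 1)
      + 1 / 2 * ∑ i, ∑ j, wmat G β i j * exp (t i + t j) * (s i - s j) ^ 2 := by
    simp only [Finset.mul_sum, ← Finset.sum_add_distrib]
    refine Finset.sum_congr rfl fun i _ => Finset.sum_congr rfl fun j _ => ?_
    simp only [Bfun, extV, Option.elim]; ring
  rw [h1, h2]; ring

lemma sum_treeW {d : DecidableEq (Option V)} {β : V → V → ℝ} (hβ : ∀ i j, β i j = β j i)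
    (ε t : V → ℝ) :
    ∑ T ∈ @STrees _ _ d (aug G), ∏ e ∈ T, treeW β ε t e = (lap (wmat G β) ε t).det := by
  have h := matrix_tree (d := d) (aug G) (fun a b => bres β ε a b * exp (extV t a + extV t b))
    (fun a b => by rw [bres_comm hβ, add_comm])
  unfold treeW
  rw [← h]
  congr 1
  ext i j
  rw [lap, Matrix.sub_apply, of_apply, of_apply, diagonal_apply, Fintype.sum_option]
  simp only [aug_adj_some_some, aug_adj_some_none, if_true, bres, extV, Option.elim, add_zero,
    wmat, of_apply, ite_mul, zero_mul]
  congr 2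
  rw [add_comm]

lemma continuous_dens (β : V → V → ℝ) (ε : V → ℝ)
    (T : Finset (Sym2 (Option V))) :
    Continuous fun p : (V → ℝ) × (V → ℝ) => dens G β ε p.1 p.2 T := by
  have hex : ∀ a, Continuous fun t : V → ℝ => extV t a := by
    intro a
    cases a with
    | none => exact continuous_const
    | some i => exact continuous_apply i
  have h1 : ∀ a, Continuous fun p : (V → ℝ) × (V → ℝ) => extV p.1 a :=
    fun a => (hex a).comp continuous_fst
  have h2 : ∀ a, Continuous fun p : (V → ℝ) × (V → ℝ) => extV p.2 a :=
    fun a => (hex a).comp continuous_snd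
  unfold dens
  refine ((continuous_finsetProd _ fun i _ => by fun_prop).mul
    (continuous_finsetProd _ fun e _ => ?_)).mul (continuous_finsetProd _ fun e _ => ?_)
  · induction e using Sym2.ind with
    | _ a b =>
      have a1 := h1 a; have a2 := h1 b; have a3 := h2 a; have a4 := h2 b
      simp only [gibbs, esym, Sym2.lift_mk, Bfun]
      fun_prop
  · induction e using Sym2.ind with
    | _ a b =>
      have a1 := h1 a; have a2 := h1 b
      simp only [treeW, esym, Sym2.lift_mk]
      fun_prop

omit [Fintype V] in
lemma treeW_nonneg {β : V → V → ℝ} (hβs : ∀ i j, β i j = β j i)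
    (hβ : ∀ i j, G.Adj i j → 0 < β i j) {ε : V → ℝ} (hε : ∀ i, 0 ≤ ε i) (t : V → ℝ)
    {e : Sym2 (Option V)} (he : e ∈ (aug G).edgeSet) : 0 ≤ treeW β ε t e := by
  induction e using Sym2.ind with
  | _ a b =>
    have hab : (aug G).Adj a b := he
    have h0 : 0 ≤ bres β ε a b := by
      cases a <;> cases b
      · exact le_rfl
      · exact hε _
      · exact hε _
      · exact (hβ _ _ (aug_adj_some_some.1 hab)).le
    simp only [treeW, esym, Sym2.lift_mk]
    rw [bres_comm hβs ε b a]
    positivity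

lemma dens_nonneg {β : V → V → ℝ} (hβs : ∀ i j, β i j = β j i)
    (hβ : ∀ i j, G.Adj i j → 0 < β i j) {ε : V → ℝ} (hε : ∀ i, 0 ≤ ε i) (t s : V → ℝ)
    {T : Finset (Sym2 (Option V))} (hT : IsSpanningTree (aug G) T) : 0 ≤ dens G β ε t s T := by
  unfold dens
  rw [prod_gibbs hβs]
  have h1 : 0 ≤ ∏ e ∈ T, treeW β ε t e :=
    Finset.prod_nonneg fun e he => treeW_nonneg hβs hβ hε t (hT.1 he)
  have h2 : 0 ≤ ∏ j, exp (-t j) / (2 * π) := Finset.prod_nonneg fun j _ => by positivity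
  positivity

/-- The measure `μ^{εδ_x}` has total mass one: sum over the trees (matrix-tree theorem), integrate
out `s` (Gaussian) and then `t` (`lintegral_tField`). -/
lemma total_mass {d : DecidableEq V} (hG : G.Connected) {β : V → V → ℝ}
    (hβs : ∀ i j, β i j = β j i) (hβ : ∀ i j, G.Adj i j → 0 < β i j) (x : V) {c : ℝ} (hc : 0 < c) :
    expect G β (singlePin x c) (fun _ _ _ => 1) = 1 := by
  obtain rfl : d = fun a b => Classical.propDecidable (a = b) := Subsingleton.elim _ _
  set ε := singlePin x c with hεdef
  have hε : ∀ i, 0 ≤ ε i := singlePin_nonneg hc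
  have hw := wmat_symm (G := G) hβs
  have hr : Rooted (wmat G β) ε := rooted_wmat hG hβ hc
  have hA := lap_posDef hw (wmat_nonneg hβ) hε hr
  have hmem : ∀ T ∈ STrees (aug G), IsSpanningTree (aug G) T := fun T hT => by
    simpa [STrees] using hT
  have hmeas : ∀ T, Measurable fun p : (V → ℝ) × (V → ℝ) => dens G β ε p.1 p.2 T :=
    fun T => (continuous_dens β ε T).measurable
  set n := Fintype.card V with hn
  have hsum : ∀ t s : V → ℝ, ∑ T ∈ STrees (aug G), ENNReal.ofReal (dens G β ε t s T)
      = ENNReal.ofReal (((2 * π) ^ n)⁻¹ * ((∏ i, exp (-t i)) * exp (-coshEnergy (wmat G β) ε t)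
        * (lap (wmat G β) ε t).det)) *
        ENNReal.ofReal (exp (-(1 / 2) * (s ⬝ᵥ lap (wmat G β) ε t *ᵥ s))) := by
    intro t s
    rw [← ENNReal.ofReal_sum_of_nonneg fun T hT => dens_nonneg hβs hβ hε t s (hmem T hT)]
    simp only [dens]
    rw [← Finset.mul_sum, sum_treeW hβs, prod_gibbs hβs, energy_eq hβs, neg_add, Real.exp_add,
      Finset.prod_div_distrib, Finset.prod_const, Finset.card_univ, ← hn]
    have hd := (hA t).det_pos
    have hP : 0 ≤ ∏ i, exp (-t i) := Finset.prod_nonneg fun j _ => (exp_pos _).le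
    rw [← ENNReal.ofReal_mul (by positivity)]
    congr 1
    rw [neg_mul]
    ring
  have hZ : ∑ T ∈ STrees (aug G), ∫⁻ p : (V → ℝ) × (V → ℝ),
      ENNReal.ofReal (dens G β ε p.1 p.2 T) = 1 := by
    rw [← lintegral_finsetSum _ fun T _ => (hmeas T).ennreal_ofReal, Measure.volume_eq_prod,
      lintegral_prod _ (Finset.measurable_sum _ fun T _ => (hmeas T).ennreal_ofReal).aemeasurable]
    have hin : ∀ t : V → ℝ, ∫⁻ s : V → ℝ, ∑ T ∈ STrees (aug G),
        ENNReal.ofReal (dens G β ε t s T)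
        = ENNReal.ofReal (((2 * π) ^ n)⁻¹ * √(2 * π) ^ n) *
          ENNReal.ofReal ((∏ i, exp (-t i)) * exp (-coshEnergy (wmat G β) ε t)
        * √(lap (wmat G β) ε t).det) := by
      intro t
      simp only [hsum]
      have hd := (hA t).det_pos
      have hP : 0 ≤ ∏ i, exp (-t i) := Finset.prod_nonneg fun j _ => (exp_pos _).le
      rw [lintegral_const_mul' _ _ ENNReal.ofReal_ne_top, lintegral_gaussian_quadForm (hA t),
        ← ENNReal.ofReal_pow (by positivity), ← ENNReal.ofReal_mul (by positivity),
        ← ENNReal.ofReal_mul (by positivity), ← ENNReal.ofReal_mul (by positivity)]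
      congr 1
      have hsq := Real.mul_self_sqrt hd.le
      have hsp := (Real.sqrt_pos.2 hd).ne'
      rw [← hn]
      field_simp
      rw [pow_two, hsq]
    simp only [hin]
    rw [lintegral_const_mul' _ _ ENNReal.ofReal_ne_top,
      lintegral_tField hw (wmat_nonneg hβ) (fun i => by simp [wmat]) hε hr, ← hn,
      ← ENNReal.ofReal_pow (by positivity), ← ENNReal.ofReal_mul (by positivity)]
    rw [mul_assoc, ← mul_pow, Real.mul_self_sqrt (by positivity), inv_mul_cancel₀ (by positivity),
      ENNReal.ofReal_one]
  unfold expect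
  simp only [mul_one]
  have hfin : ∀ T ∈ STrees (aug G), ∫⁻ p : (V → ℝ) × (V → ℝ),
      ENNReal.ofReal (dens G β ε p.1 p.2 T) ≠ ∞ := fun T hT => by
    have := Finset.single_le_sum (f := fun T => ∫⁻ p : (V → ℝ) × (V → ℝ),
      ENNReal.ofReal (dens G β ε p.1 p.2 T)) (fun _ _ => bot_le) hT
    rw [hZ] at this
    exact ne_top_of_le_ne_top ENNReal.one_ne_top this
  have hI : ∀ T ∈ STrees (aug G), ∫ p : (V → ℝ) × (V → ℝ), dens G β ε p.1 p.2 T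
      = (∫⁻ p : (V → ℝ) × (V → ℝ), ENNReal.ofReal (dens G β ε p.1 p.2 T)).toReal := fun T hT =>
    integral_eq_lintegral_of_nonneg_ae
      (Filter.Eventually.of_forall fun p => dens_nonneg hβs hβ hε p.1 p.2 (hmem T hT))
      (hmeas T).aestronglyMeasurable
  rw [Finset.sum_congr rfl hI, ← ENNReal.toReal_sum hfin, hZ, ENNReal.toReal_one]

end Augmented

end H22

namespace H22

/-! ### Gradient coordinates -/

open scoped ENNReal

section Coordinates

variable {V : Type*} [Fintype V] (x : V)

/-- The vector on `V` with value `τ` at `x` and `u` elsewhere. -/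
noncomputable def glue (τ : ℝ) (u : {i : V // i ≠ x} → ℝ) : V → ℝ :=
  fun i => if h : i = x then τ else u ⟨i, h⟩

/-- The field `(t, s)` with value `(τ, σ)` at `x` and rescaled gradients `(u, v)`. -/
noncomputable def ofGrad
    (q : (ℝ × ℝ) × (({i : V // i ≠ x} → ℝ) × ({i : V // i ≠ x} → ℝ))) : (V → ℝ) × (V → ℝ) :=
  (fun i => q.1.1 + glue x 0 q.2.1 i, fun i => q.1.2 + exp (-q.1.1) * glue x 0 q.2.2 i)

omit [Fintype V] in
lemma glue_self (τ : ℝ) (u : {i : V // i ≠ x} → ℝ) : glue x τ u x = τ := by simp [glue]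

omit [Fintype V] in
lemma glue_ne (τ : ℝ) (u : {i : V // i ≠ x} → ℝ) (i : {i : V // i ≠ x}) :
    glue x τ u i = u i := by
  rw [glue, dif_neg i.2]

omit [Fintype V] in
lemma measurable_glue : Measurable fun p : ℝ × ({i : V // i ≠ x} → ℝ) => glue x p.1 p.2 := by
  refine measurable_pi_lambda _ fun i => ?_
  unfold glue
  split_ifs with h <;> fun_prop

omit [Fintype V] in
lemma measurable_ofGrad : Measurable (ofGrad x) := by
  have h1 : Measurable fun q : (ℝ × ℝ) × (({i : V // i ≠ x} → ℝ) × ({i : V // i ≠ x} → ℝ)) =>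
      glue x 0 q.2.1 := (measurable_glue x).comp (by fun_prop : Measurable fun
        q : (ℝ × ℝ) × (({i : V // i ≠ x} → ℝ) × ({i : V // i ≠ x} → ℝ)) => ((0 : ℝ), q.2.1))
  have h2 : Measurable fun q : (ℝ × ℝ) × (({i : V // i ≠ x} → ℝ) × ({i : V // i ≠ x} → ℝ)) =>
      glue x 0 q.2.2 := (measurable_glue x).comp (by fun_prop : Measurable fun
        q : (ℝ × ℝ) × (({i : V // i ≠ x} → ℝ) × ({i : V // i ≠ x} → ℝ)) => ((0 : ℝ), q.2.2))
  unfold ofGrad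
  refine Measurable.prodMk (measurable_pi_lambda _ fun i => ?_)
    (measurable_pi_lambda _ fun i => ?_)
  · have := (measurable_pi_apply i).comp h1
    simp only [Function.comp_def] at this
    fun_prop
  · have := (measurable_pi_apply i).comp h2
    simp only [Function.comp_def] at this
    fun_prop

lemma lintegral_glue {F : (V → ℝ) → ℝ≥0∞} (hF : Measurable F) :
    ∫⁻ t : V → ℝ, F t = ∫⁻ τ : ℝ, ∫⁻ u : {i : V // i ≠ x} → ℝ, F (glue x τ u) := by
  have e1 := (volume_preserving_piEquivPiSubtypeProd (fun _ : V => ℝ) (fun i => i = x)).symm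
  have hm : Measurable fun z : ({i // i = x} → ℝ) × ({i // ¬ i = x} → ℝ) =>
      F ((MeasurableEquiv.piEquivPiSubtypeProd (fun _ : V => ℝ) fun i => i = x).symm z) :=
    hF.comp e1.measurable
  rw [← e1.lintegral_comp hF, Measure.volume_eq_prod, lintegral_prod _ hm.aemeasurable]
  have h := (volume_preserving_funUnique {i : V // i = x} ℝ).symm.lintegral_comp_emb
    (MeasurableEquiv.measurableEmbedding _) fun a => ∫⁻ y : {i : V // ¬i = x} → ℝ,
      F ((MeasurableEquiv.piEquivPiSubtypeProd (fun _ : V => ℝ) fun i => i = x).symm (a, y))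
  refine Eq.trans ?_ (h.symm.trans ?_)
  · congr!
  · refine lintegral_congr fun τ => ?_
    congr!

/-- Change of variables under `u ↦ k + c u`. -/
lemma lintegral_affine {κ : Type*} [Fintype κ] {F : (κ → ℝ) → ℝ≥0∞} (hF : Measurable F) (k : ℝ)
    {c : ℝ} (hc : 0 < c) :
    ∫⁻ u : κ → ℝ, F u
      = ENNReal.ofReal (c ^ Fintype.card κ) * ∫⁻ u : κ → ℝ, F (fun i => k + c * u i) := by
  have h1 : ∫⁻ u : κ → ℝ, F (fun i => k + c * u i)
      = ∫⁻ u, F ((fun _ => k) + u) ∂(Measure.map (c • ·) (volume : Measure (κ → ℝ))) := by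
    rw [lintegral_map (by fun_prop) (by fun_prop)]
    rfl
  rw [h1, Measure.map_addHaar_smul _ hc.ne', lintegral_smul_measure,
    lintegral_add_left_eq_self, Module.finrank_fintype_fun_eq_card, smul_eq_mul, ← mul_assoc,
    ← ENNReal.ofReal_mul (by positivity), abs_of_pos (by positivity),
    mul_inv_cancel₀ (by positivity), ENNReal.ofReal_one, one_mul]

/-- Lebesgue measure in the coordinates given by the value at `x` and the rescaled gradients. -/
lemma lintegral_ofGrad {F : (V → ℝ) × (V → ℝ) → ℝ≥0∞} (hF : Measurable F) :
    ∫⁻ p, F p = ∫⁻ q, ENNReal.ofReal (exp (-q.1.1) ^ Fintype.card {i : V // i ≠ x})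
      * F (ofGrad x q) := by
  set U := {i : V // i ≠ x} → ℝ
  set m := Fintype.card {i : V // i ≠ x}
  have hG : Measurable fun q : (ℝ × ℝ) × (U × U) =>
      ENNReal.ofReal (exp (-q.1.1) ^ m) * F (ofGrad x q) :=
    Measurable.mul (by fun_prop) (hF.comp (measurable_ofGrad x))
  -- For fixed `t`, translate and rescale the differences of `s`; this produces the Jacobian.
  have hs : ∀ (t : V → ℝ) (τ : ℝ), ∫⁻ s, F (t, s) = ∫⁻ σ : ℝ, ∫⁻ v : U,
      ENNReal.ofReal (exp (-τ) ^ m) * F (t, fun i => σ + exp (-τ) * glue x 0 v i) := by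
    intro t τ
    rw [lintegral_glue x (F := fun s => F (t, s)) (by fun_prop)]
    refine lintegral_congr fun σ => ?_
    rw [lintegral_affine (κ := {i : V // i ≠ x}) (F := fun u => F (t, glue x σ u)) (by
      have := (measurable_glue x).comp (measurable_prodMk_left (x := σ))
      simp only [Function.comp_def] at this
      fun_prop) σ (exp_pos (-τ)), lintegral_const_mul' _ _ ENNReal.ofReal_ne_top]
    congr 1
    refine lintegral_congr fun v => ?_
    congr 2
    ext i
    unfold glue
    split_ifs <;> simp
  have hin : Measurable fun t : V → ℝ => ∫⁻ s, F (t, s) := hF.lintegral_prod_right'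
  rw [Measure.volume_eq_prod (V → ℝ), lintegral_prod _ hF.aemeasurable, lintegral_glue x hin,
    Measure.volume_eq_prod (ℝ × ℝ), lintegral_prod _ hG.aemeasurable, Measure.volume_eq_prod ℝ,
    lintegral_prod _ hG.lintegral_prod_right'.aemeasurable]
  refine lintegral_congr fun τ => ?_
  have hin' : Measurable fun u : U => ∫⁻ s, F (glue x τ u, s) :=
    hin.comp ((measurable_glue x).comp (measurable_prodMk_left (x := τ)))
  rw [lintegral_affine hin' τ one_pos]
  have hτ : ∀ u : U, ∫⁻ s, F (glue x τ (fun i => τ + 1 * u i), s)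
      = ∫⁻ σ : ℝ, ∫⁻ v : U, ENNReal.ofReal (exp (-τ) ^ m) * F (ofGrad x ((τ, σ), (u, v))) := by
    intro u
    rw [hs _ τ]
    refine lintegral_congr fun σ => lintegral_congr fun v => ?_
    congr 2
    unfold ofGrad
    congr 1
    ext i
    unfold glue
    split_ifs <;> simp
  simp only [hτ]
  rw [one_pow, ENNReal.ofReal_one, one_mul]
  have hm3 : Measurable fun p : (U × ℝ) × U => ENNReal.ofReal (exp (-τ) ^ m) *
      F (ofGrad x ((τ, p.1.2), (p.1.1, p.2))) :=
    hG.comp (by fun_prop : Measurable fun p : (U × ℝ) × U => (((τ, p.1.2), (p.1.1, p.2)) :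
      (ℝ × ℝ) × (U × U)))
  rw [lintegral_lintegral_swap hm3.lintegral_prod_right'.aemeasurable]
  refine lintegral_congr fun σ => ?_
  rw [Measure.volume_eq_prod U, lintegral_prod]
  exact (hG.comp (measurable_prodMk_left (x := ((τ, σ) : ℝ × ℝ)))).aemeasurable

/-- Integrals that factorize in the coordinates given by the value at `x` and the rescaled
gradients. -/
lemma integral_ofGrad {Φ : (V → ℝ) × (V → ℝ) → ℝ} (hΦ : Measurable Φ)
    {a : ℝ × ℝ → ℝ} {b : ({i : V // i ≠ x} → ℝ) × ({i : V // i ≠ x} → ℝ) → ℝ}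
    (h : ∀ q, exp (-q.1.1) ^ Fintype.card {i : V // i ≠ x} * Φ (ofGrad x q) = a q.1 * b q.2) :
    ∫ p, Φ p = (∫ z, a z) * ∫ y, b y := by
  set U := {i : V // i ≠ x} → ℝ
  set m := Fintype.card {i : V // i ≠ x}
  have hd : Measurable fun q : (ℝ × ℝ) × (U × U) => ENNReal.ofReal (exp (-q.1.1) ^ m) := by
    fun_prop
  have hvol : (volume : Measure ((V → ℝ) × (V → ℝ))) = Measure.map (ofGrad x)
      ((volume : Measure ((ℝ × ℝ) × (U × U))).withDensity
        fun q => ENNReal.ofReal (exp (-q.1.1) ^ m)) := by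
    refine Measure.ext_of_lintegral _ fun F hF => ?_
    have hF' : Measurable fun q => F (ofGrad x q) := hF.comp (measurable_ofGrad x)
    rw [lintegral_map hF (measurable_ofGrad x), lintegral_withDensity_eq_lintegral_mul _ hd hF',
      lintegral_ofGrad x hF]
    rfl
  rw [hvol, integral_map (measurable_ofGrad x).aemeasurable hΦ.aestronglyMeasurable,
    integral_withDensity_eq_integral_toReal_smul hd
      (Filter.Eventually.of_forall fun q => ENNReal.ofReal_lt_top), ← integral_prod_mul]
  refine integral_congr_ae (Filter.Eventually.of_forall fun q => ?_)
  simp only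
  rw [ENNReal.toReal_ofReal (by positivity), smul_eq_mul, h q]

end Coordinates

end H22

namespace H22

/-! ### Factorization of the density -/

open scoped ENNReal

section RootDensity

/-- The weight of the edge between `x` and the root has integral `2π / ε`. -/
lemma integral_rootWeight {ε : ℝ} (hε : 0 < ε) :
    ∫ z : ℝ × ℝ, ε * exp (-(ε * rootEnergy z.1 z.2)) = 2 * π := by
  have hc : Continuous fun z : ℝ × ℝ => ε * exp (-(ε * rootEnergy z.1 z.2)) := by
    unfold rootEnergy; fun_prop
  rw [integral_eq_lintegral_of_nonneg_ae (Filter.Eventually.of_forall fun z => by positivity)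
    hc.aestronglyMeasurable, Measure.volume_eq_prod,
    lintegral_prod _ hc.measurable.ennreal_ofReal.aemeasurable]
  have hin : ∀ τ : ℝ, ∫⁻ σ : ℝ, ENNReal.ofReal (ε * exp (-(ε * rootEnergy τ σ)))
      = ENNReal.ofReal (ε * √(2 * π / ε)) *
        ENNReal.ofReal (exp (-τ / 2) * exp (-(ε * (cosh (-τ) - 1)))) := by
    intro τ
    have hb : 0 < ε * exp τ / 2 := by positivity
    have h1 : ∀ σ : ℝ, ε * exp (-(ε * rootEnergy τ σ))
        = ε * exp (-(ε * (cosh τ - 1))) * exp (-(ε * exp τ / 2) * σ ^ 2) := by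
      intro σ
      rw [mul_assoc, ← Real.exp_add, rootEnergy]
      ring_nf
    simp only [h1]
    rw [← ofReal_integral_eq_lintegral_ofReal ((integrable_exp_neg_mul_sq hb).const_mul _)
      (Filter.Eventually.of_forall fun σ => by positivity), integral_const_mul, integral_gaussian,
      ← ENNReal.ofReal_mul (by positivity), cosh_neg]
    congr 1
    have h2 : π / (ε * exp τ / 2) = 2 * π / ε * exp (-τ / 2) ^ 2 := by
      rw [← Real.exp_nat_mul, show ((2 : ℕ) : ℝ) * (-τ / 2) = -τ by push_cast; ring, Real.exp_neg]
      field_simp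
    rw [h2, Real.sqrt_mul (by positivity), Real.sqrt_sq (exp_pos _).le]
    ring
  simp only [hin]
  rw [lintegral_const_mul' _ _ ENNReal.ofReal_ne_top,
    lintegral_neg_eq_self (μ := volume) (fun τ : ℝ =>
      ENNReal.ofReal (exp (τ / 2) * exp (-(ε * (cosh τ - 1))))),
    lintegral_exp_cosh hε, ← ENNReal.ofReal_mul (by positivity), mul_assoc,
    Real.mul_self_sqrt (by positivity), ENNReal.toReal_ofReal (by positivity)]
  field_simp

end RootDensity

section Trees

variable {V : Type*} [Fintype V] {G : SimpleGraph V}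

/-- Under pinning at the single vertex `x`, the weight of a spanning tree is the weight
`ε e^{t_x}` of the root edge times a weight `K t` that does not depend on `ε` and is homogeneous
under translations of `t`. -/
lemma exists_treeFactor {d : DecidableEq V} {β : V → V → ℝ} (hβ : ∀ i j, β i j = β j i) (x : V)
    {T : Finset (Sym2 (Option V))} (hT : IsSpanningTree (aug G) T) :
    ∃ K : (V → ℝ) → ℝ,
      (∀ ε t, ∏ e ∈ T, treeW β (singlePin x ε) t e = ε * exp (t x) * K t) ∧
      ∀ τ u, K (fun i => τ + u i) = exp τ ^ (2 * Fintype.card {i : V // i ≠ x}) * K u := by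
  obtain ⟨p, hp, -, rfl⟩ := exists_acycMap hT
  have hW : ∀ ε t, ∏ e ∈ mapEdges p, treeW β (singlePin x ε) t e
      = ∏ i, bres β (singlePin x ε) (some i) (p i) * exp (t i + extV t (p i)) := by
    intro ε t
    rw [prod_mapEdges hp]
    refine Finset.prod_congr rfl fun i _ => ?_
    simp only [treeW, esym, Sym2.lift_mk]
    rw [bres_comm hβ _ (p i), add_comm (extV t (p i))]
    simp [extV]
  by_cases hn : ∃ i, i ≠ x ∧ p i = none
  · -- The tree uses a root edge at another vertex, which has weight zero.
    obtain ⟨i, hix, hi⟩ := hn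
    refine ⟨fun _ => 0, fun ε t => ?_, fun τ u => by simp⟩
    rw [hW, mul_zero]
    refine Finset.prod_eq_zero (Finset.mem_univ i) ?_
    rw [hi]
    simp [bres, singlePin_eq, hix]
  · push Not at hn
    -- A vertex of minimal height has the root as its parent, and only `x` can have it.
    have hx : p x = none := by
      obtain ⟨h, hh⟩ := hp
      obtain ⟨i, -, hi⟩ := Finset.exists_min_image Finset.univ (fun i : V => h (some i))
        ⟨x, Finset.mem_univ x⟩
      have hi0 : p i = none := by
        cases hpi : p i with
        | none => rfl
        | some j =>
          have h1 := hh i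
          rw [hpi] at h1
          exact absurd (hi j (Finset.mem_univ j)) (not_le.2 h1)
      by_cases hix : i = x
      · exact hix ▸ hi0
      · exact absurd hi0 (hn i hix)
    have hcard : (Finset.univ.erase x).card = Fintype.card {i : V // i ≠ x} := by
      rw [Finset.card_erase_of_mem (Finset.mem_univ x), Finset.card_univ,
        Fintype.card_subtype_compl, Fintype.card_subtype_eq]
    refine ⟨fun t => ∏ i ∈ Finset.univ.erase x,
      β i ((p i).getD x) * exp (t i + t ((p i).getD x)), fun ε t => ?_, fun τ u => ?_⟩
    · rw [hW, ← Finset.mul_prod_erase _ _ (Finset.mem_univ x), hx]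
      congr 1
      · simp [bres, singlePin_eq, extV]
      · refine Finset.prod_congr rfl fun i hi => ?_
        obtain ⟨j, hj⟩ := Option.ne_none_iff_exists'.1 (hn i (Finset.ne_of_mem_erase hi))
        rw [hj]
        simp [bres, extV]
    · rw [← hcard, pow_mul, ← Finset.prod_const, ← Finset.prod_mul_distrib]
      refine Finset.prod_congr rfl fun i _ => ?_
      rw [← Real.exp_nat_mul, mul_left_comm, ← Real.exp_add]
      push_cast
      ring_nf

end Trees

section Factorization

variable {V : Type*} [Fintype V] {G : SimpleGraph V}

omit [Fintype V] in
/-- The interaction along an edge of the graph depends only on the rescaled gradients. -/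
lemma Bfun_ofGrad (x : V) (q : (ℝ × ℝ) × (({i : V // i ≠ x} → ℝ) × ({i : V // i ≠ x} → ℝ)))
    (i j : V) : Bfun (ofGrad x q).1 (ofGrad x q).2 (some i) (some j)
      = Bfun (glue x 0 q.2.1) (glue x 0 q.2.2) (some i) (some j) := by
  simp only [Bfun, ofGrad, extV, Option.elim]
  set τ := q.1.1
  set U := glue x 0 q.2.1
  set W := glue x 0 q.2.2
  have h1 : exp (τ + U i + (τ + U j)) = exp τ ^ 2 * exp (U i + U j) := by
    rw [← Real.exp_nat_mul, ← Real.exp_add]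
    push_cast
    ring_nf
  have h2 : exp (-τ) * exp τ = 1 := by rw [← Real.exp_add]; simp
  rw [h1, show τ + U i - (τ + U j) = U i - U j by ring]
  linear_combination (1 / 2 * (W i - W j) ^ 2 * exp (U i + U j) *
    (exp (-τ) * exp τ + 1)) * h2

/-- The weight of a tree in the gradient coordinates; `K` is the weight of the edges of the tree
other than the root edge. -/
noncomputable def gradDens (G : SimpleGraph V) (β : V → V → ℝ) (x : V) (K : (V → ℝ) → ℝ)
    (y : ({i : V // i ≠ x} → ℝ) × ({i : V // i ≠ x} → ℝ)) : ℝ :=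
  (∏ j, exp (-glue x 0 y.1 j) / (2 * π)) *
    exp (-bulkEnergy G β (glue x 0 y.1) (glue x 0 y.2)) * K (glue x 0 y.1)

/-- Times the Jacobian, the density factorizes in the gradient coordinates: the powers of
`e^{t_x}` from the reference measure, the tree weight and the Jacobian cancel. -/
lemma dens_ofGrad {d : DecidableEq V} {β : V → V → ℝ} (hβ : ∀ i j, β i j = β j i) (x : V)
    {T : Finset (Sym2 (Option V))} {K : (V → ℝ) → ℝ}
    (h1 : ∀ ε t, ∏ e ∈ T, treeW β (singlePin x ε) t e = ε * exp (t x) * K t)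
    (h2 : ∀ τ u, K (fun i => τ + u i) = exp τ ^ (2 * Fintype.card {i : V // i ≠ x}) * K u)
    (ε : ℝ) (q : (ℝ × ℝ) × (({i : V // i ≠ x} → ℝ) × ({i : V // i ≠ x} → ℝ))) :
    exp (-q.1.1) ^ Fintype.card {i : V // i ≠ x} *
        dens G β (singlePin x ε) (ofGrad x q).1 (ofGrad x q).2 T
      = ε * exp (-(ε * rootEnergy q.1.1 q.1.2)) * gradDens G β x K q.2 := by
  obtain rfl : d = fun a b => Classical.propDecidable (a = b) := Subsingleton.elim _ _
  have hcard : Fintype.card V = Fintype.card {i : V // i ≠ x} + 1 := by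
    have : Fintype.card {i : V // i ≠ x} = Fintype.card V - 1 := by
      rw [Fintype.card_subtype_compl, Fintype.card_subtype_eq]
    have hpos : 0 < Fintype.card V := Fintype.card_pos_iff.2 ⟨x⟩
    omega
  have hroot : ∑ i, singlePin x ε i * rootEnergy ((ofGrad x q).1 i) ((ofGrad x q).2 i)
      = ε * rootEnergy q.1.1 q.1.2 := by
    simp only [singlePin_eq, ite_mul, zero_mul, Finset.sum_ite_eq', Finset.mem_univ, if_true]
    simp [ofGrad, glue_self]
  have hbulk : bulkEnergy G β (ofGrad x q).1 (ofGrad x q).2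
      = bulkEnergy G β (glue x 0 q.2.1) (glue x 0 q.2.2) := by
    simp only [bulkEnergy, Bfun_ofGrad]
  have href : ∏ j, exp (-(ofGrad x q).1 j) / (2 * π)
      = exp (-q.1.1) ^ (Fintype.card {i : V // i ≠ x} + 1) *
        ∏ j, exp (-glue x 0 q.2.1 j) / (2 * π) := by
    rw [← hcard, ← Finset.card_univ, ← Finset.prod_const, ← Finset.prod_mul_distrib]
    refine Finset.prod_congr rfl fun j _ => ?_
    rw [mul_div_assoc', ← Real.exp_add, ofGrad, neg_add]
  have hx : (ofGrad x q).1 x = q.1.1 := by simp [ofGrad, glue_self]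
  rw [dens, prod_gibbs hβ, h1, hroot, hbulk, href, hx, neg_add, Real.exp_add]
  rw [show (ofGrad x q).1 = fun i => q.1.1 + glue x 0 q.2.1 i from rfl, h2, gradDens]
  set m := Fintype.card {i : V // i ≠ x}
  have h3 : exp (-q.1.1) ^ m * exp (-q.1.1) ^ (m + 1) * exp q.1.1 * exp q.1.1 ^ (2 * m) = 1 := by
    rw [show exp (-q.1.1) ^ m * exp (-q.1.1) ^ (m + 1) * exp q.1.1 * exp q.1.1 ^ (2 * m)
      = (exp (-q.1.1) * exp q.1.1) ^ (2 * m + 1) by ring, ← Real.exp_add]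
    simp
  linear_combination (ε * exp (-(ε * rootEnergy q.1.1 q.1.2)) * ((∏ j, exp (-glue x 0 q.2.1 j) /
    (2 * π)) * exp (-bulkEnergy G β (glue x 0 q.2.1) (glue x 0 q.2.2)) * K (glue x 0 q.2.1))) * h3

/-- Expectations of products factorize, the second factor being the same for all values of the
pinning. -/
lemma exists_expect_factor {d : DecidableEq V} {β : V → V → ℝ} (hβ : ∀ i j, β i j = β j i)
    (x : V) :
    ∃ b : (({i : V // i ≠ x} → ℝ × ℝ) → ℝ) → ℝ, ∀ (ε : ℝ) (f : ℝ × ℝ → ℝ)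
      (g : ({i : V // i ≠ x} → ℝ × ℝ) → ℝ), Measurable f → Measurable g →
      expect G β (singlePin x ε) (fun t s _ => f (t x, s x) *
          g (fun i => (t i.1 - t x, (s i.1 - s x) * exp (t x))))
        = (∫ z : ℝ × ℝ, ε * exp (-(ε * rootEnergy z.1 z.2)) * f z) * b g := by
  obtain rfl : d = fun a b => Classical.propDecidable (a = b) := Subsingleton.elim _ _
  have hK : ∀ T : Finset (Sym2 (Option V)), ∃ K : (V → ℝ) → ℝ, IsSpanningTree (aug G) T →
      (∀ ε t, ∏ e ∈ T, treeW β (singlePin x ε) t e = ε * exp (t x) * K t) ∧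
      ∀ τ u, K (fun i => τ + u i) = exp τ ^ (2 * Fintype.card {i : V // i ≠ x}) * K u := by
    intro T
    by_cases hT : IsSpanningTree (aug G) T
    · obtain ⟨K, hK⟩ := exists_treeFactor hβ x hT
      exact ⟨K, fun _ => hK⟩
    · exact ⟨fun _ => 0, fun h => absurd h hT⟩
  choose K hK using hK
  refine ⟨fun g => ∑ T ∈ STrees (aug G), ∫ y : ({i : V // i ≠ x} → ℝ) × ({i : V // i ≠ x} → ℝ),
    gradDens G β x (K T) y * g (fun i => (y.1 i, y.2 i)), fun ε f g hf hg => ?_⟩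
  rw [expect, Finset.mul_sum]
  refine Finset.sum_congr rfl fun T hT => ?_
  have hT' : IsSpanningTree (aug G) T := by simpa [STrees] using hT
  obtain ⟨h1, h2⟩ := hK T hT'
  have hgrad : Measurable fun p : (V → ℝ) × (V → ℝ) => fun i : {i : V // i ≠ x} =>
      (p.1 i.1 - p.1 x, (p.2 i.1 - p.2 x) * exp (p.1 x)) :=
    measurable_pi_lambda _ fun i => by fun_prop
  have hfx : Measurable fun p : (V → ℝ) × (V → ℝ) => f (p.1 x, p.2 x) :=
    hf.comp (by fun_prop)
  refine integral_ofGrad x (Φ := fun p => dens G β (singlePin x ε) p.1 p.2 T *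
      (f (p.1 x, p.2 x) * g (fun i => (p.1 i.1 - p.1 x, (p.2 i.1 - p.2 x) * exp (p.1 x)))))
    (a := fun z => ε * exp (-(ε * rootEnergy z.1 z.2)) * f z)
    (b := fun y => gradDens G β x (K T) y * g (fun i => (y.1 i, y.2 i)))
    ((continuous_dens β (singlePin x ε) T).measurable.mul (hfx.mul (hg.comp hgrad)))
    (fun q => ?_)
  have hx1 : (ofGrad x q).1 x = q.1.1 := by simp [ofGrad, glue_self]
  have hx2 : (ofGrad x q).2 x = q.1.2 := by simp [ofGrad, glue_self]
  have hgq : (fun i : {i : V // i ≠ x} => ((ofGrad x q).1 i.1 - (ofGrad x q).1 x,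
      ((ofGrad x q).2 i.1 - (ofGrad x q).2 x) * exp ((ofGrad x q).1 x)))
      = fun i => (q.2.1 i, q.2.2 i) := by
    funext i
    rw [hx1, hx2]
    simp only [ofGrad, glue_ne]
    have h3 : exp (-q.1.1) * exp q.1.1 = 1 := by rw [← Real.exp_add]; simp
    refine Prod.ext (by ring) ?_
    simp only
    linear_combination q.2.2 i * h3
  rw [← mul_assoc, dens_ofGrad hβ x h1 h2, hx1, hx2]
  rw [hx1, hx2] at hgq
  rw [hgq]
  ring

end Factorization

end H22

namespace H22

/-- product structure for single pinning: under `μ^{ε_xδ_x}`,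
the pair `(t_x, s_x)` is independent of the rescaled gradient vector
`(t_i − t_x, (s_i − s_x)e^{t_x})_{i≠x}`; the joint law of `(t_x,s_x)` has density
`(ε_x/(2π)) exp[−ε_x(cosh t_x − 1 + ½ s_x² e^{t_x})]` on `ℝ²` (independently of the
graph `Γ`); and the law of the gradient vector does not depend on `ε_x`. -/
theorem stmt_12 {V : Type*} [Fintype V] [DecidableEq V]
    (G : SimpleGraph V) (hG : G.Connected)
    (β : V → V → ℝ) (hβsymm : ∀ i j, β i j = β j i)
    (hβpos : ∀ i j, G.Adj i j → 0 < β i j)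
    (x : V) (εx : ℝ) (hεx : 0 < εx) :
    -- independence of (t_x, s_x) and the rescaled gradients
    (∀ (f : ℝ × ℝ → ℝ) (g : ({i : V // i ≠ x} → ℝ × ℝ) → ℝ),
      Measurable f → Measurable g →
      (∃ C : ℝ, ∀ p, |f p| ≤ C) → (∃ C : ℝ, ∀ q, |g q| ≤ C) →
      expect G β (singlePin x εx)
          (fun t s _ => f (t x, s x) *
            g (fun i => (t i.1 - t x, (s i.1 - s x) * Real.exp (t x))))
        = expect G β (singlePin x εx) (fun t s _ => f (t x, s x)) *
          expect G β (singlePin x εx)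
            (fun t s _ => g (fun i => (t i.1 - t x, (s i.1 - s x) * Real.exp (t x))))) ∧
    -- the density of the law of (t_x, s_x)
    (∀ f : ℝ × ℝ → ℝ, Measurable f → (∃ C : ℝ, ∀ p, |f p| ≤ C) →
      expect G β (singlePin x εx) (fun t s _ => f (t x, s x))
        = ∫ p : ℝ × ℝ, f p *
            (εx / (2 * Real.pi) *
              Real.exp (-(εx * (Real.cosh p.1 - 1 + (1 / 2) * p.2 ^ 2 * Real.exp p.1))))) ∧
    -- the law of the gradient vector does not depend on ε_x
    (∀ (g : ({i : V // i ≠ x} → ℝ × ℝ) → ℝ), Measurable g → (∃ C : ℝ, ∀ q, |g q| ≤ C) →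
      ∀ εx' : ℝ, 0 < εx' →
      expect G β (singlePin x εx)
          (fun t s _ => g (fun i => (t i.1 - t x, (s i.1 - s x) * Real.exp (t x))))
        = expect G β (singlePin x εx')
            (fun t s _ => g (fun i => (t i.1 - t x, (s i.1 - s x) * Real.exp (t x))))) := by
  obtain ⟨b, hb⟩ := exists_expect_factor (G := G) (d := ‹DecidableEq V›) hβsymm x
  have hone : ∀ ε : ℝ, 0 < ε → 2 * π * b (fun _ => 1) = 1 := by
    intro ε hε
    have h1 := hb ε (fun _ => 1) (fun _ => 1) measurable_const measurable_const
    simp only [mul_one] at h1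
    rw [total_mass hG hβsymm hβpos x hε, integral_rootWeight hε] at h1
    exact h1.symm
  have hf1 : ∀ (ε : ℝ) (f : ℝ × ℝ → ℝ), Measurable f →
      expect G β (singlePin x ε) (fun t s _ => f (t x, s x))
        = (∫ z : ℝ × ℝ, ε * exp (-(ε * rootEnergy z.1 z.2)) * f z) * b (fun _ => 1) := by
    intro ε f hf
    have h1 := hb ε f (fun _ => 1) hf measurable_const
    simpa only [mul_one] using h1
  have hg1 : ∀ (ε : ℝ), 0 < ε → ∀ g : ({i : V // i ≠ x} → ℝ × ℝ) → ℝ, Measurable g →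
      expect G β (singlePin x ε)
        (fun t s _ => g (fun i => (t i.1 - t x, (s i.1 - s x) * Real.exp (t x))))
        = 2 * π * b g := by
    intro ε hε g hg
    have h1 := hb ε (fun _ => 1) g measurable_const hg
    simp only [mul_one, one_mul] at h1
    rw [integral_rootWeight hε] at h1
    exact h1
  refine ⟨fun f g hf hg _ _ => ?_, fun f hf _ => ?_, fun g hg _ ε' hε' => ?_⟩
  · rw [hb εx f g hf hg, hf1 εx f hf, hg1 εx hεx g hg]
    linear_combination (-(∫ z : ℝ × ℝ, εx * exp (-(εx * rootEnergy z.1 z.2)) * f z) * b g) *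
      hone εx hεx
  · rw [hf1 εx f hf, eq_div_of_mul_eq (by positivity) ((mul_comm _ _).trans (hone εx hεx)),
      ← integral_mul_const]
    refine integral_congr_ae (Filter.Eventually.of_forall fun z => ?_)
    simp only [rootEnergy]
    ring
  · rw [hg1 εx hεx g hg, hg1 ε' hε' g hg]

end H22
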